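/- arXiv:2212.09933 — 3 statements merged into one kernel-verified Lean document; each statement's English description precedes it below -/
import Mathlib

section
/- Let n ≥ 2 be even and fix a maximal isotropic subspace y of (ZMod 2)^{2n}. Then the number of maximal isotropic subspaces x with dim(x ∩ y) = n/2 equals binom(n, n/2)_2 · 2^{C(n/2+1, 2)}, where binom(n,m)_2 = ∏_{i=0}^{m−1} (2^{n−i} − 1)/(2^{i+1} − 1) is the Gaussian binomial coefficient and C(m,2) = m(m−1)/2. -/
open Finset

abbrev F2 := ZMod 2
/-- `F2^{2n}`, split into the first and last `n` coordinates. -/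
abbrev PV (n : ℕ) := (Fin n → F2) × (Fin n → F2)

/-- Symplectic product on `F2^{2n}`: zero iff `a₁·b₂ = a₂·b₁`. -/
def symp {n : ℕ} (a b : PV n) : F2 :=
  (∑ i, a.1 i * b.2 i) + (∑ i, a.2 i * b.1 i)

/-- A subspace is isotropic if the symplectic product vanishes on it. -/
def IsIsotropic {n : ℕ} (S : Submodule F2 (PV n)) : Prop :=
  ∀ x ∈ S, ∀ y ∈ S, symp x y = 0

/-- `Lset n k` = `L^n_k`, the set of `k`-dimensional isotropic subspaces of `F2^{2n}`. -/
def Lset (n k : ℕ) : Set (Submodule F2 (PV n)) :=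
  {S | IsIsotropic S ∧ Module.finrank F2 S = k}

/-- Integer lift of a vector over `F2`, with values in `{0,1} ⊆ ℤ`. -/
def liftZ {n : ℕ} (v : Fin n → F2) : Fin n → ℤ := fun i => ((v i).val : ℤ)

def dotZ {n : ℕ} (a b : Fin n → ℤ) : ℤ := ∑ i, a i * b i

/-- The phase `i^{x̂₁·x̂₂} · i^{ŷ₁·ŷ₂} · i^{−((x+y)^^₁·(x+y)^^₂)} · (−1)^{x̂₂·ŷ₁}`. -/
noncomputable def phase {n : ℕ} (x y : PV n) : ℂ :=
  Complex.I ^ (dotZ (liftZ x.1) (liftZ x.2)) *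
  Complex.I ^ (dotZ (liftZ y.1) (liftZ y.2)) *
  Complex.I ^ (-(dotZ (liftZ (x + y).1) (liftZ (x + y).2))) *
  (-1 : ℂ) ^ (dotZ (liftZ x.2) (liftZ y.1))

/-- `w(x,y) ∈ {0,1} ⊆ F2`: zero iff the phase equals `1`. -/
noncomputable def wght {n : ℕ} (x y : PV n) : F2 :=
  if phase x y = 1 then 0 else 1

/-- An outcome of an isotropic subspace `S` is `f : S → F2` with
`f(x+y) = f(x)+f(y)+w(x,y)`. -/
def IsOutcome {n : ℕ} (S : Submodule F2 (PV n)) (f : S → F2) : Prop :=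
  ∀ x y : S, f (x + y) = f x + f y + wght (x : PV n) (y : PV n)

/-- Two outcomes are consistent if they agree on the intersection of their domains. -/
def ConsistentOn {n : ℕ} {S₁ S₂ : Submodule F2 (PV n)} (f₁ : S₁ → F2) (f₂ : S₂ → F2) : Prop :=
  ∀ v (h1 : v ∈ S₁) (h2 : v ∈ S₂), f₁ ⟨v, h1⟩ = f₂ ⟨v, h2⟩

/-- The Gaussian binomial coefficient `binom(n,m)_2 = ∏_{i=0}^{m−1} (2^{n−i}−1)/(2^{i+1}−1)`. -/
def gaussBinom (n m : ℕ) : ℚ :=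
  ∏ i ∈ Finset.range m, ((2 : ℚ) ^ (n - i) - 1) / ((2 : ℚ) ^ (i + 1) - 1)


section Aux

/-- Sequential counting of tuples. -/
theorem aux_count_tuples {V : Type*} [Finite V] (P : ∀ k, (Fin k → V) → Prop) (c : ℕ → ℕ)
    (h0 : ∀ t, P 0 t)
    (hp : ∀ k (t : Fin k → V) (v : V), P (k+1) (Fin.snoc (α := fun _ => V) t v) → P k t)
    (hs : ∀ k (t : Fin k → V), P k t →
      Nat.card {v : V // P (k+1) (Fin.snoc (α := fun _ => V) t v)} = c k) (k : ℕ) :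
    Nat.card {t : Fin k → V // P k t} = ∏ i ∈ Finset.range k, c i := by
  induction k with
  | zero =>
    rw [Finset.range_zero, Finset.prod_empty, Nat.card_eq_one_iff_unique]
    exact ⟨⟨fun a b => Subtype.ext (Subsingleton.elim _ _)⟩, ⟨⟨Fin.elim0, h0 _⟩⟩⟩
  | succ k ih =>
    let f : (Σ t : {t : Fin k → V // P k t},
          {v : V // P (k+1) (Fin.snoc (α := fun _ => V) t.1 v)}) →
        {t : Fin (k+1) → V // P (k+1) t} :=
      fun s => ⟨Fin.snoc (α := fun _ => V) s.1.1 s.2.1, s.2.2⟩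
    have hf : Function.Bijective f := by
      constructor
      · rintro ⟨⟨t, ht⟩, ⟨v, hv⟩⟩ ⟨⟨t', ht'⟩, ⟨v', hv'⟩⟩ h
        have h' : (Fin.snoc (α := fun _ => V) t v : Fin (k+1) → V) =
          Fin.snoc (α := fun _ => V) t' v' := congrArg Subtype.val h
        have h1 : v = v' := by simpa using congrFun h' (Fin.last k)
        have h2 : t = t' := funext fun i => by simpa using congrFun h' i.castSucc
        subst h1 h2
        rfl
      · rintro ⟨t, ht⟩
        have h1 : P (k+1) (Fin.snoc (α := fun _ => V) (Fin.init (α := fun _ => V) t)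
            (t (Fin.last k))) := by
          rw [Fin.snoc_init_self (α := fun _ => V)]; exact ht
        exact ⟨⟨⟨_, hp k _ _ h1⟩, ⟨_, h1⟩⟩,
          Subtype.ext (Fin.snoc_init_self (α := fun _ => V) _)⟩
    have := Fintype.ofFinite {t : Fin k → V // P k t}
    rw [← Nat.card_congr (Equiv.ofBijective f hf), Nat.card_sigma, Finset.prod_range_succ, ← ih,
      Finset.sum_congr rfl (fun t _ => hs k t.1 t.2)]
    simp

variable {V : Type*} [AddCommGroup V] [Module (ZMod 2) V] [Finite V]

theorem aux_card_sub (S : Submodule (ZMod 2) V) :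
    Nat.card S = 2 ^ Module.finrank (ZMod 2) S := by
  rw [Module.natCard_eq_pow_finrank (K := ZMod 2), Nat.card_zmod]

theorem aux_card_diff (S T : Submodule (ZMod 2) V) :
    Nat.card {v : V // v ∈ S ∧ v ∉ T} =
      2 ^ Module.finrank (ZMod 2) S - 2 ^ Module.finrank (ZMod 2) ↥(S ⊓ T) := by
  rw [← aux_card_sub, ← aux_card_sub]
  have h1 : Nat.card {v : V // v ∈ S ∧ v ∉ T} = ((S : Set V) \ (T : Set V)).ncard := rfl
  have h2 : Nat.card S = (S : Set V).ncard := rfl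
  have h3 : Nat.card ↥(S ⊓ T) = ((S : Set V) ∩ (T : Set V)).ncard := rfl
  rw [h1, h2, h3]
  have := Set.ncard_inter_add_ncard_diff_eq_ncard (S : Set V) (T : Set V) (Set.toFinite _)
  omega

variable (B : LinearMap.BilinForm (ZMod 2) V) (y : Submodule (ZMod 2) V)

/-- Isotropic tuples independent modulo `y`. -/
def AuxP (k : ℕ) (t : Fin k → V) : Prop :=
  LinearIndependent (ZMod 2) (y.mkQ ∘ t) ∧ ∀ i j, B (t i) (t j) = 0

variable {B y}

theorem AuxP.finrank_span {k : ℕ} {t : Fin k → V} (h : AuxP B y k t) :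
    Module.finrank (ZMod 2) (Submodule.span (ZMod 2) (Set.range t)) = k := by
  have := finrank_span_eq_card (LinearIndependent.of_comp _ h.1)
  simpa using this

theorem AuxP.inf_eq {k : ℕ} {t : Fin k → V} (h : AuxP B y k t) :
    y ⊓ Submodule.span (ZMod 2) (Set.range t) = ⊥ := by
  rw [eq_bot_iff]
  rintro x ⟨hx, hxt⟩
  obtain ⟨c, rfl⟩ := (Submodule.mem_span_range_iff_exists_fun (ZMod 2)).1 hxt
  have h2 := Fintype.linearIndependent_iff.1 h.1 c (by
    have := (Submodule.Quotient.mk_eq_zero y).2 hx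
    rw [← Submodule.mkQ_apply] at this
    simpa using this)
  simp [h2]

theorem AuxP.iso {k : ℕ} {t : Fin k → V} (h : AuxP B y k t) :
    ∀ a ∈ Submodule.span (ZMod 2) (Set.range t),
      ∀ b ∈ Submodule.span (ZMod 2) (Set.range t), B a b = 0 := by
  intro a ha b hb
  obtain ⟨c, rfl⟩ := (Submodule.mem_span_range_iff_exists_fun (ZMod 2)).1 ha
  obtain ⟨d, rfl⟩ := (Submodule.mem_span_range_iff_exists_fun (ZMod 2)).1 hb
  simp [h.2]

theorem auxP_snoc (hB : B.IsAlt) {k : ℕ} (t : Fin k → V) (v : V) :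
    AuxP B y (k+1) (Fin.snoc (α := fun _ => V) t v) ↔
      AuxP B y k t ∧ v ∈ B.orthogonal (Submodule.span (ZMod 2) (Set.range t)) ∧
        v ∉ y ⊔ Submodule.span (ZMod 2) (Set.range t) := by
  have e1 : LinearIndependent (ZMod 2) (y.mkQ ∘ (Fin.snoc (α := fun _ => V) t v : Fin (k+1) → V)) ↔
      LinearIndependent (ZMod 2) (y.mkQ ∘ t) ∧
        v ∉ y ⊔ Submodule.span (ZMod 2) (Set.range t) := by
    rw [Fin.comp_snoc, linearIndependent_finSnoc, Set.range_comp, ← Submodule.map_span,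
      ← Submodule.comap_map_mkQ, Submodule.mem_comap]
  have e2 : v ∈ B.orthogonal (Submodule.span (ZMod 2) (Set.range t)) ↔ ∀ i, B (t i) v = 0 := by
    rw [LinearMap.BilinForm.mem_orthogonal_iff]
    constructor
    · intro h i
      exact h _ (Submodule.subset_span ⟨i, rfl⟩)
    · intro h a ha
      obtain ⟨c, rfl⟩ := (Submodule.mem_span_range_iff_exists_fun (ZMod 2)).1 ha
      simp [h]
  have e3 : (∀ i j, B ((Fin.snoc (α := fun _ => V) t v : Fin (k+1) → V) i)
      ((Fin.snoc (α := fun _ => V) t v : Fin (k+1) → V) j) = 0) ↔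
      (∀ i j, B (t i) (t j) = 0) ∧ ∀ i, B (t i) v = 0 := by
    have hc : (∀ i, B v (t i) = 0) ↔ ∀ i, B (t i) v = 0 :=
      forall_congr' fun i => hB.eq_iff
    simp only [Fin.forall_fin_succ', Fin.snoc_castSucc, Fin.snoc_last, hc, forall_and]
    have := hB v
    tauto
  unfold AuxP
  rw [e1, e2, e3]
  tauto

variable {n : ℕ}

theorem aux_orth_self (hB : B.IsAlt) (hN : B.Nondegenerate)
    (hV : Module.finrank (ZMod 2) V = 2 * n) (hy : Module.finrank (ZMod 2) y = n)
    (hyi : ∀ a ∈ y, ∀ b ∈ y, B a b = 0) : B.orthogonal y = y := by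
  symm
  apply Submodule.eq_of_le_of_finrank_eq
  · intro a ha
    rw [LinearMap.BilinForm.mem_orthogonal_iff]
    intro b hb
    exact hyi b hb a ha
  · rw [LinearMap.BilinForm.finrank_orthogonal hN, hV, hy]; omega

theorem aux_inf_orth (hB : B.IsAlt) (hN : B.Nondegenerate)
    (hV : Module.finrank (ZMod 2) V = 2 * n) (hy : Module.finrank (ZMod 2) y = n)
    (hyi : ∀ a ∈ y, ∀ b ∈ y, B a b = 0) {k : ℕ} (W : Submodule (ZMod 2) V)
    (hW : Module.finrank (ZMod 2) W = k) (hyW : y ⊓ W = ⊥) :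
    Module.finrank (ZMod 2) ↥(y ⊓ B.orthogonal W) = n - k := by
  have e : y ⊓ B.orthogonal W = B.orthogonal (y ⊔ W) := by
    nth_rw 1 [← aux_orth_self hB hN hV hy hyi]
    apply le_antisymm
    · rintro a ⟨h1, h2⟩
      rw [LinearMap.BilinForm.mem_orthogonal_iff]
      intro b hb
      obtain ⟨p, hp, q, hq, rfl⟩ := Submodule.mem_sup.1 hb
      have h3 := LinearMap.BilinForm.mem_orthogonal_iff.1 h1 p hp
      have h4 := LinearMap.BilinForm.mem_orthogonal_iff.1 h2 q hq
      rw [map_add, LinearMap.add_apply, h3, h4, add_zero]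
    · exact le_inf (LinearMap.BilinForm.orthogonal_le le_sup_left)
        (LinearMap.BilinForm.orthogonal_le le_sup_right)
  have := Submodule.finrank_sup_add_finrank_inf_eq y W
  rw [hyW, finrank_bot] at this
  rw [e, LinearMap.BilinForm.finrank_orthogonal hN, hV]
  omega

theorem aux_le_n (hV : Module.finrank (ZMod 2) V = 2 * n) (hy : Module.finrank (ZMod 2) y = n)
    {k : ℕ} (W : Submodule (ZMod 2) V)
    (hW : Module.finrank (ZMod 2) W = k) (hyW : y ⊓ W = ⊥) : k ≤ n := by
  have := Submodule.finrank_sup_add_finrank_inf_eq y W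
  rw [hyW, finrank_bot] at this
  have := Submodule.finrank_le (y ⊔ W)
  omega

theorem aux_count_all (hB : B.IsAlt) (hN : B.Nondegenerate)
    (hV : Module.finrank (ZMod 2) V = 2 * n) (hy : Module.finrank (ZMod 2) y = n)
    (hyi : ∀ a ∈ y, ∀ b ∈ y, B a b = 0) (k : ℕ) :
    Nat.card {t : Fin k → V // AuxP B y k t} =
      ∏ i ∈ Finset.range k, (2 ^ (2 * n - i) - 2 ^ n) := by
  apply aux_count_tuples (AuxP B y) (fun i => 2 ^ (2 * n - i) - 2 ^ n)
  · intro t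
    exact ⟨linearIndependent_empty_type, fun i => i.elim0⟩
  · intro k t v h
    exact ((auxP_snoc hB t v).1 h).1
  · intro k t h
    simp only [auxP_snoc hB, h, true_and]
    rw [aux_card_diff, LinearMap.BilinForm.finrank_orthogonal hN, hV, h.finrank_span]
    set W := Submodule.span (ZMod 2) (Set.range t) with hW
    have h1 := aux_inf_orth hB hN hV hy hyi W h.finrank_span h.inf_eq
    have hk := aux_le_n hV hy W h.finrank_span h.inf_eq
    have hle : W ≤ B.orthogonal W := fun a ha => by
      rw [LinearMap.BilinForm.mem_orthogonal_iff]
      exact fun b hb => h.iso b hb a ha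
    have e : B.orthogonal W ⊓ (y ⊔ W) = W ⊔ (y ⊓ B.orthogonal W) := by
      rw [inf_comm, sup_comm, sup_inf_assoc_of_le _ hle]
    have h2 := Submodule.finrank_sup_add_finrank_inf_eq W (y ⊓ B.orthogonal W)
    have h3 : W ⊓ (y ⊓ B.orthogonal W) = ⊥ := by
      rw [eq_bot_iff, ← h.inf_eq]
      exact fun a ha => ⟨ha.2.1, ha.1⟩
    rw [h3, finrank_bot, h1, h.finrank_span] at h2
    rw [e, show Module.finrank (ZMod 2) ↥(W ⊔ (y ⊓ B.orthogonal W)) = n by omega]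

theorem aux_count_in (hB : B.IsAlt) (x : Submodule (ZMod 2) V)
    (hx : Module.finrank (ZMod 2) x = n)
    (hxi : ∀ a ∈ x, ∀ b ∈ x, B a b = 0) (m : ℕ)
    (hxy : Module.finrank (ZMod 2) ↥(x ⊓ y) = m) (k : ℕ) :
    Nat.card {t : Fin k → V // AuxP B y k t ∧ ∀ i, t i ∈ x} =
      ∏ i ∈ Finset.range k, (2 ^ n - 2 ^ (m + i)) := by
  have key : ∀ (k : ℕ) (t : Fin k → V) (v : V),
      (AuxP B y (k+1) (Fin.snoc (α := fun _ => V) t v) ∧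
        ∀ i, (Fin.snoc (α := fun _ => V) t v : Fin (k+1) → V) i ∈ x) ↔
      (AuxP B y k t ∧ ∀ i, t i ∈ x) ∧ v ∈ x ∧
        v ∉ y ⊔ Submodule.span (ZMod 2) (Set.range t) := by
    intro k t v
    rw [auxP_snoc hB, Fin.forall_fin_succ']
    simp only [Fin.snoc_castSucc, Fin.snoc_last]
    constructor
    · tauto
    · rintro ⟨⟨h1, h2⟩, h3, h4⟩
      refine ⟨⟨h1, ?_, h4⟩, h2, h3⟩
      rw [LinearMap.BilinForm.mem_orthogonal_iff]
      intro b hb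
      refine hxi b ?_ v h3
      have : Submodule.span (ZMod 2) (Set.range t) ≤ x := by
        rw [Submodule.span_le]; rintro _ ⟨i, rfl⟩; exact h2 i
      exact this hb
  apply aux_count_tuples (fun k t => AuxP B y k t ∧ ∀ i, t i ∈ x) (fun i => 2 ^ n - 2 ^ (m + i))
  · intro t
    exact ⟨⟨linearIndependent_empty_type, fun i => i.elim0⟩, fun i => i.elim0⟩
  · intro k t v h
    exact ((key k t v).1 h).1
  · intro k t h
    simp only [key, h, true_and]
    have hWx : Submodule.span (ZMod 2) (Set.range t) ≤ x := by
      rw [Submodule.span_le]; rintro _ ⟨i, rfl⟩; exact h.2 i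
    have hk := h.1.finrank_span
    have hi := h.1.inf_eq
    simp only [implies_true, true_and]
    rw [aux_card_diff, hx]
    set W := Submodule.span (ZMod 2) (Set.range t) with hW
    have e : x ⊓ (y ⊔ W) = W ⊔ (y ⊓ x) := by
      rw [inf_comm, sup_comm, sup_inf_assoc_of_le _ hWx]
    have h2 := Submodule.finrank_sup_add_finrank_inf_eq W (y ⊓ x)
    have h3 : W ⊓ (y ⊓ x) = ⊥ := by
      rw [eq_bot_iff, ← hi]
      exact fun a ha => ⟨ha.2.1, ha.1⟩
    rw [h3, finrank_bot, inf_comm y x, hxy, hk] at h2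
    rw [e, inf_comm y x, show Module.finrank (ZMod 2) ↥(W ⊔ (x ⊓ y)) = m + k by omega]

theorem aux_unique (hB : B.IsAlt) (hN : B.Nondegenerate)
    (hV : Module.finrank (ZMod 2) V = 2 * n) (hy : Module.finrank (ZMod 2) y = n)
    (hyi : ∀ a ∈ y, ∀ b ∈ y, B a b = 0) {k : ℕ} (t : Fin k → V) (h : AuxP B y k t) :
    ∃! x : Submodule (ZMod 2) V, (((∀ a ∈ x, ∀ b ∈ x, B a b = 0) ∧
      Module.finrank (ZMod 2) x = n) ∧ Module.finrank (ZMod 2) ↥(x ⊓ y) = n - k) ∧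
      ∀ i, t i ∈ x := by
  have hk := h.finrank_span
  have hi := h.inf_eq
  have hiso := h.iso
  have ht : ∀ i, t i ∈ Submodule.span (ZMod 2) (Set.range t) :=
    fun i => Submodule.subset_span ⟨i, rfl⟩
  have hspan : ∀ x : Submodule (ZMod 2) V, (∀ i, t i ∈ x) →
      Submodule.span (ZMod 2) (Set.range t) ≤ x := by
    intro x hx
    rw [Submodule.span_le]; rintro _ ⟨i, rfl⟩; exact hx i
  set W := Submodule.span (ZMod 2) (Set.range t) with hW
  have hd := aux_inf_orth hB hN hV hy hyi W hk hi
  have hkn := aux_le_n hV hy W hk hi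
  have h2 := Submodule.finrank_sup_add_finrank_inf_eq W (y ⊓ B.orthogonal W)
  have h3 : W ⊓ (y ⊓ B.orthogonal W) = ⊥ := by
    rw [eq_bot_iff, ← hi]
    exact fun a ha => ⟨ha.2.1, ha.1⟩
  rw [h3, finrank_bot, hd, hk] at h2
  refine ⟨W ⊔ (y ⊓ B.orthogonal W), ⟨⟨⟨?_, by omega⟩, ?_⟩, ?_⟩, ?_⟩
  · intro a ha b hb
    obtain ⟨p, hp, q, hq, rfl⟩ := Submodule.mem_sup.1 ha
    obtain ⟨r, hr, s, hs, rfl⟩ := Submodule.mem_sup.1 hb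
    have e1 := hiso p hp r hr
    have e2 := LinearMap.BilinForm.mem_orthogonal_iff.1 hs.2 p hp
    have e3 := hB.eq_iff.1 (LinearMap.BilinForm.mem_orthogonal_iff.1 hq.2 r hr)
    have e4 := hyi q hq.1 s hs.1
    simp only [map_add, LinearMap.add_apply, e1, e2, e3, e4, add_zero]
  · have : (W ⊔ (y ⊓ B.orthogonal W)) ⊓ y = y ⊓ B.orthogonal W := by
      rw [sup_comm, sup_inf_assoc_of_le _ inf_le_left, inf_comm W y, hi, sup_bot_eq]
    rw [this, hd]
  · exact fun i => (le_sup_left : W ≤ _) (ht i)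
  · rintro x ⟨⟨⟨x1, x2⟩, x3⟩, x4⟩
    have hWx := hspan x x4
    have hle : x ⊓ y ≤ y ⊓ B.orthogonal W := by
      rintro a ⟨ha, hb⟩
      refine ⟨hb, ?_⟩
      rw [SetLike.mem_coe, LinearMap.BilinForm.mem_orthogonal_iff]
      exact fun b hb => x1 b (hWx hb) a ha
    have heq := Submodule.eq_of_le_of_finrank_eq hle (by rw [x3, hd])
    symm
    apply Submodule.eq_of_le_of_finrank_eq
    · rw [← heq]
      exact sup_le hWx inf_le_left
    · omega

theorem aux_main_nat (hB : B.IsAlt) (hN : B.Nondegenerate)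
    (hV : Module.finrank (ZMod 2) V = 2 * n) (hy : Module.finrank (ZMod 2) y = n)
    (hyi : ∀ a ∈ y, ∀ b ∈ y, B a b = 0) (k : ℕ) :
    Nat.card {x : Submodule (ZMod 2) V // ((∀ a ∈ x, ∀ b ∈ x, B a b = 0) ∧
      Module.finrank (ZMod 2) x = n) ∧ Module.finrank (ZMod 2) ↥(x ⊓ y) = n - k} *
      ∏ i ∈ Finset.range k, (2 ^ n - 2 ^ (n - k + i)) =
      ∏ i ∈ Finset.range k, (2 ^ (2 * n - i) - 2 ^ n) := by
  rw [← aux_count_all hB hN hV hy hyi k]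
  set X := {x : Submodule (ZMod 2) V // ((∀ a ∈ x, ∀ b ∈ x, B a b = 0) ∧
      Module.finrank (ZMod 2) x = n) ∧ Module.finrank (ZMod 2) ↥(x ⊓ y) = n - k} with hX
  have : Finite (Submodule (ZMod 2) V) := inferInstance
  have : Fintype X := Fintype.ofFinite X
  let f : (Σ x : X, {t : Fin k → V // AuxP B y k t ∧ ∀ i, t i ∈ x.1}) →
      {t : Fin k → V // AuxP B y k t} := fun s => ⟨s.2.1, s.2.2.1⟩
  have hf : Function.Bijective f := by
    constructor
    · rintro ⟨⟨x, hx⟩, ⟨t, ht⟩⟩ ⟨⟨x', hx'⟩, ⟨t', ht'⟩⟩ h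
      have h' : t = t' := congrArg Subtype.val h
      subst h'
      have := (aux_unique hB hN hV hy hyi t ht.1).unique ⟨hx, ht.2⟩ ⟨hx', ht'.2⟩
      subst this
      rfl
    · rintro ⟨t, ht⟩
      obtain ⟨x, hx, -⟩ := aux_unique hB hN hV hy hyi t ht
      exact ⟨⟨⟨x, hx.1⟩, ⟨t, ht, hx.2⟩⟩, rfl⟩
  rw [← Nat.card_congr (Equiv.ofBijective f hf), Nat.card_sigma,
    Finset.sum_congr rfl (fun x _ => aux_count_in hB x.1 x.2.1.2 x.2.1.1 (n - k) x.2.2 k)]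
  simp

end Aux

theorem aux_arith (n k : ℕ) (hk : n = k + k) :
    (∏ i ∈ Finset.range k, ((2:ℚ) ^ (2 * n - i) - 2 ^ n)) =
      gaussBinom n k * 2 ^ (Nat.choose (k + 1) 2) *
        ∏ i ∈ Finset.range k, ((2:ℚ) ^ n - 2 ^ (n - k + i)) := by
  have hpos : ∀ m : ℕ, (2:ℚ) ^ (m + 1) - 1 ≠ 0 := by
    intro m
    have : (1:ℚ) < 2 ^ (m+1) := one_lt_pow₀ (by norm_num) (by omega)
    linarith
  have e1 : (∏ i ∈ Finset.range k, ((2:ℚ) ^ (2 * n - i) - 2 ^ n)) =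
      2 ^ (n * k) * ∏ i ∈ Finset.range k, ((2:ℚ) ^ (n - i) - 1) := by
    rw [pow_mul, ← Finset.card_range k, ← Finset.prod_const, Finset.card_range,
      ← Finset.prod_mul_distrib]
    refine Finset.prod_congr rfl fun i hi => ?_
    have := Finset.mem_range.1 hi
    rw [show 2 * n - i = n + (n - i) by omega, pow_add]; ring
  have e2 : (∏ i ∈ Finset.range k, ((2:ℚ) ^ n - 2 ^ (n - k + i))) =
      2 ^ (k * k + ∑ i ∈ Finset.range k, i) * ∏ i ∈ Finset.range k, ((2:ℚ) ^ (i + 1) - 1) := by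
    rw [← Finset.prod_range_reflect (fun i => (2:ℚ) ^ (i + 1) - 1), pow_add, pow_mul,
      ← Finset.prod_pow_eq_pow_sum]
    have : ((2:ℚ) ^ k) ^ k = ∏ i ∈ Finset.range k, (2:ℚ) ^ k := by simp
    rw [this, ← Finset.prod_mul_distrib, ← Finset.prod_mul_distrib]
    refine Finset.prod_congr rfl fun i hi => ?_
    have := Finset.mem_range.1 hi
    rw [show n - k + i = k + i by omega, show n = k + i + (k - 1 - i + 1) by omega,
      pow_add _ (k + i), pow_add _ k i]
    ring
  have e3 : n * k = Nat.choose (k + 1) 2 + (k * k + ∑ i ∈ Finset.range k, i) := by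
    have h1 := Finset.sum_range_id_mul_two (k + 1)
    have h2 := Finset.sum_range_succ (fun i => i) k
    have h3 := Finset.sum_range_id (k + 1)
    rw [Nat.choose_two_right, ← h3, hk]
    simp only [Nat.add_sub_cancel] at h1
    nlinarith
  rw [e1, e2, gaussBinom, Finset.prod_div_distrib, e3, pow_add]
  have hne : (∏ i ∈ Finset.range k, ((2:ℚ) ^ (i + 1) - 1)) ≠ 0 :=
    Finset.prod_ne_zero_iff.2 fun i _ => hpos i
  field_simp

/-- The symplectic product as a bilinear form. -/
def sympB (n : ℕ) : LinearMap.BilinForm (ZMod 2) (PV n) :=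
  LinearMap.mk₂ (ZMod 2) symp
    (by intro a b c; simp [symp, add_mul, Finset.sum_add_distrib]; ring)
    (by intro r a b; simp [symp, mul_assoc, Finset.mul_sum, mul_add])
    (by intro a b c; simp [symp, mul_add, Finset.sum_add_distrib]; ring)
    (by intro r a b; simp [symp, mul_left_comm, Finset.mul_sum, mul_add])

theorem sympB_apply {n : ℕ} (a b : PV n) : sympB n a b = symp a b := rfl

theorem sympB_alt (n : ℕ) : (sympB n).IsAlt := by
  intro a
  rw [sympB_apply, symp, Finset.sum_congr rfl (fun i _ => mul_comm (a.2 i) (a.1 i))]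
  exact CharTwo.add_self_eq_zero _

theorem sympB_sep (n : ℕ) : ∀ a : PV n, (∀ b, sympB n a b = 0) → a = 0 := by
  intro a h
  ext i
  · have := h (0, Pi.single i 1)
    simpa [sympB_apply, symp, Pi.single_apply] using this
  · have := h (Pi.single i 1, 0)
    simpa [sympB_apply, symp, Pi.single_apply] using this

theorem sympB_nondeg (n : ℕ) : (sympB n).Nondegenerate :=
  ⟨sympB_sep n, fun a h => sympB_sep n a fun b => (sympB_alt n).eq_iff.1 (h b)⟩

/-- For even `n ≥ 2` and `y` a maximal isotropic subspace of `F2^{2n}`, the number of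
maximal isotropic subspaces `x` with `dim(x ∩ y) = n/2` equals
`binom(n, n/2)_2 · 2^{C(n/2+1, 2)}`. -/
theorem count_half_distance :
    ∀ n : ℕ, Even n → 2 ≤ n → ∀ y ∈ Lset n n,
      (Nat.card {x : Submodule F2 (PV n) |
          x ∈ Lset n n ∧ Module.finrank F2 ↥(x ⊓ y) = n / 2} : ℚ) =
        gaussBinom n (n / 2) * 2 ^ (Nat.choose (n / 2 + 1) 2) := by
  intro n hn h2 y hy
  obtain ⟨k, hk⟩ := hn
  have hk2 : n / 2 = k := by omega
  have hnk : n - k = k := by omega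
  have hV : Module.finrank (ZMod 2) (PV n) = 2 * n := by
    simp [Module.finrank_prod]; omega
  have key := aux_main_nat (sympB_alt n) (sympB_nondeg n) hV hy.2 hy.1 k
  have hkq := congrArg (Nat.cast (R := ℚ)) key
  have c1 : ((∏ i ∈ Finset.range k, (2 ^ n - 2 ^ (n - k + i)) : ℕ) : ℚ) =
      ∏ i ∈ Finset.range k, ((2:ℚ) ^ n - 2 ^ (n - k + i)) := by
    rw [Nat.cast_prod]
    refine Finset.prod_congr rfl fun i hi => ?_
    have := Finset.mem_range.1 hi
    rw [Nat.cast_sub (Nat.pow_le_pow_right (by norm_num) (by omega))]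
    push_cast; rfl
  have c2 : ((∏ i ∈ Finset.range k, (2 ^ (2 * n - i) - 2 ^ n) : ℕ) : ℚ) =
      ∏ i ∈ Finset.range k, ((2:ℚ) ^ (2 * n - i) - 2 ^ n) := by
    rw [Nat.cast_prod]
    refine Finset.prod_congr rfl fun i hi => ?_
    have := Finset.mem_range.1 hi
    rw [Nat.cast_sub (Nat.pow_le_pow_right (by norm_num) (by omega))]
    push_cast; rfl
  rw [Nat.cast_mul, c1, c2, aux_arith n k hk] at hkq
  have hne : ∏ i ∈ Finset.range k, ((2:ℚ) ^ n - 2 ^ (n - k + i)) ≠ 0 := by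
    refine Finset.prod_ne_zero_iff.2 fun i hi => ?_
    have := Finset.mem_range.1 hi
    have : (2:ℚ) ^ (n - k + i) < 2 ^ n := pow_lt_pow_right₀ (by norm_num) (by omega)
    linarith
  have := mul_right_cancel₀ hne hkq
  rw [hk2, ← this, hnk]
  rfl
end

section
/- For n ≥ 2 let G'_n be the graph whose vertices are the maximal isotropic subspaces of (ZMod 2)^{2n} containing a fixed one-dimensional isotropic subspace w, with x adjacent to y iff dim(x∩y) = n−1, and let R_n = λ(G'_n)/max Spec(G'_n) be its spectral ratio. Then log₂ R_n → −1 as n → ∞ (equivalently, R_n → 1/2). -/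
open Finset

open scoped Classical

noncomputable instance {n : ℕ} : Fintype (Submodule F2 (PV n)) := by
  have : Finite (Submodule F2 (PV n)) :=
    Finite.of_injective (fun S => (S : Set (PV n))) SetLike.coe_injective
  exact Fintype.ofFinite _

/-- Adjacency matrix (over `ℝ`) of the graph with adjacency relation `Adj`. -/
noncomputable def adjMat {V : Type*} [Fintype V] (Adj : V → V → Prop) : Matrix V V ℝ :=
  fun x y => if Adj x y then 1 else 0

/-- The set of eigenvalues of a matrix. -/
def eigSet {V : Type*} [Fintype V] (A : Matrix V V ℝ) : Set ℝ :=
  {μ | ∃ v : V → ℝ, v ≠ 0 ∧ A.mulVec v = μ • v}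

/-- The largest eigenvalue. -/
noncomputable def maxEig {V : Type*} [Fintype V] (A : Matrix V V ℝ) : ℝ :=
  sSup (eigSet A)

/-- The spectral parameter: the second largest element of `{|μ| : μ ∈ Spec(A)}`. -/
noncomputable def specParam {V : Type*} [Fintype V] (A : Matrix V V ℝ) : ℝ :=
  sSup ((abs '' eigSet A) \ {sSup (abs '' eigSet A)})

/-- Vertices of `G'_n`: the maximal isotropic subspaces of `F2^{2n}` containing `w`. -/
abbrev GVtx (n : ℕ) (w : Submodule F2 (PV n)) :=
  {x : Submodule F2 (PV n) // x ∈ Lset n n ∧ w ≤ x}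

/-- The adjacency matrix of the graph on `GVtx n w` where `x ∼ y` iff `dim(x∩y) = k`. -/
noncomputable def adjG (n : ℕ) (w : Submodule F2 (PV n)) (k : ℕ) :
    Matrix (GVtx n w) (GVtx n w) ℝ :=
  adjMat (fun x y => Module.finrank F2 ↥(x.1 ⊓ y.1) = k)

section Aux

variable {n : ℕ}
theorem symp_comm (a b : PV n) : symp a b = symp b a := by
  unfold symp
  rw [add_comm]
  congr 1 <;> exact Finset.sum_congr rfl (fun i _ => mul_comm _ _)

theorem symp_self (a : PV n) : symp a a = 0 := by
  unfold symp
  have : ∑ i, a.2 i * a.1 i = ∑ i, a.1 i * a.2 i :=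
    Finset.sum_congr rfl (fun i _ => mul_comm _ _)
  rw [this]
  exact CharTwo.add_self_eq_zero _

/-- The symplectic form as a bilinear form. -/
def sB (n : ℕ) : LinearMap.BilinForm F2 (PV n) :=
  LinearMap.mk₂ F2 (fun a b => symp a b)
    (by intro a b c; simp [symp, add_mul, Finset.sum_add_distrib]; ring)
    (by intro c a b; simp [symp, Finset.mul_sum, mul_add, mul_assoc])
    (by intro a b c; simp [symp, mul_add, Finset.sum_add_distrib]; ring)
    (by intro c a b; simp [symp, Finset.mul_sum, mul_add, mul_left_comm])

theorem sB_apply (a b : PV n) : sB n a b = symp a b := rfl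

theorem sB_refl : (sB n).IsRefl := by
  intro a b h
  rw [sB_apply] at *
  rw [symp_comm]; exact h

theorem sB_nondeg : (sB n).Nondegenerate := by
  have key : ∀ m : PV n, (∀ a, symp m a = 0) → m = 0 := by
    intro m h
    ext i
    · have := h (0, Pi.single i 1)
      simpa [symp, Pi.single_apply] using this
    · have := h (Pi.single i 1, 0)
      simpa [symp, Pi.single_apply] using this
  exact ⟨fun m h => key m h, fun m h => key m fun a => by rw [symp_comm]; exact h a⟩

def perp (S : Submodule F2 (PV n)) : Submodule F2 (PV n) := (sB n).orthogonal S

theorem mem_perp {S : Submodule F2 (PV n)} {p : PV n} : p ∈ perp S ↔ ∀ a ∈ S, symp a p = 0 :=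
  Iff.rfl

theorem finrank_PV : Module.finrank F2 (PV n) = 2 * n := by
  simp [two_mul]

theorem finrank_perp (S : Submodule F2 (PV n)) :
    Module.finrank F2 (perp S) = 2 * n - Module.finrank F2 S := by
  rw [perp, LinearMap.BilinForm.finrank_orthogonal sB_nondeg, finrank_PV]

theorem perp_anti {S T : Submodule F2 (PV n)} (h : S ≤ T) : perp T ≤ perp S :=
  fun _ hp a ha => hp a (h ha)

theorem card_sub (S : Submodule F2 (PV n)) :
    (univ.filter (fun p => p ∈ S)).card = 2 ^ Module.finrank F2 S := by
  have := Module.card_eq_pow_finrank (K := F2) (V := S)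
  rw [ZMod.card] at this
  rw [← this, Fintype.card_subtype]

theorem card_sdiff_sub {S T : Submodule F2 (PV n)} :
    (univ.filter (fun p => p ∈ S ∧ p ∉ T)).card + 2 ^ Module.finrank F2 ↥(S ⊓ T)
      = 2 ^ Module.finrank F2 S := by
  rw [← card_sub, ← card_sub, ← Finset.card_union_of_disjoint]
  · congr 1
    ext p
    simp only [Finset.mem_union, Finset.mem_filter, Finset.mem_univ, true_and, Submodule.mem_inf]
    tauto
  · rw [Finset.disjoint_left]
    intro p
    simp only [Finset.mem_filter, Finset.mem_univ, true_and, Submodule.mem_inf]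
    tauto

/-- hyperplane orthogonal to `p` -/
def ph (p : PV n) : Submodule F2 (PV n) := LinearMap.ker (sB n p)

theorem mem_ph {p a : PV n} : a ∈ ph p ↔ symp p a = 0 := Iff.rfl

theorem finrank_inf_ph {u : Submodule F2 (PV n)} {p : PV n} (hp : p ∉ perp u) :
    Module.finrank F2 ↥(u ⊓ ph p) + 1 = Module.finrank F2 u := by
  have h0 : (sB n p).domRestrict u ≠ 0 := by
    intro h
    apply hp
    intro a ha
    have := LinearMap.congr_fun h ⟨a, ha⟩
    change symp a p = 0
    rw [symp_comm]
    exact this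
  have := Module.Dual.finrank_ker_add_one_of_ne_zero (K := F2) (f := (sB n p).domRestrict u) h0
  rw [← this]
  congr 1
  have h2 : u ⊓ ph p = (LinearMap.ker ((sB n p).domRestrict u)).map u.subtype := by
    ext a
    simp only [Submodule.mem_inf, Submodule.mem_map, LinearMap.mem_ker, Submodule.subtype_apply,
      Subtype.exists]
    constructor
    · rintro ⟨ha, hb⟩
      exact ⟨a, ha, hb, rfl⟩
    · rintro ⟨b, hb, hc, rfl⟩
      exact ⟨hb, hc⟩
  rw [h2]
  exact Submodule.finrank_map_subtype_eq _ _

theorem le_perp_self {x : Submodule F2 (PV n)} (hx : IsIsotropic x) : x ≤ perp x :=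
  fun p hp a ha => hx a ha p hp

theorem isotropic_of_le {x u : Submodule F2 (PV n)} (hx : IsIsotropic x) (h : u ≤ x) :
    IsIsotropic u := fun a ha b hb => hx a (h ha) b (h hb)

theorem perp_eq_self {x : Submodule F2 (PV n)} (hx : x ∈ Lset n n) : perp x = x := by
  symm
  apply Submodule.eq_of_le_of_finrank_eq (le_perp_self hx.1)
  rw [finrank_perp, hx.2]; omega

/-- the reflection-type neighbour of `x` through `p`. -/
def nb (p : PV n) (x : Submodule F2 (PV n)) : Submodule F2 (PV n) :=
  (x ⊓ ph p) ⊔ Submodule.span F2 {p}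

theorem mem_nb {p a : PV n} {x : Submodule F2 (PV n)} :
    a ∈ nb p x ↔ ∃ y ∈ x, symp p y = 0 ∧ ∃ c : F2, y + c • p = a := by
  simp only [nb, Submodule.mem_sup, Submodule.mem_inf, mem_ph, Submodule.mem_span_singleton]
  constructor
  · rintro ⟨y, ⟨h1, h2⟩, z, ⟨c, rfl⟩, rfl⟩
    exact ⟨y, h1, h2, c, rfl⟩
  · rintro ⟨y, h1, h2, c, rfl⟩
    exact ⟨y, ⟨h1, h2⟩, _, ⟨c, rfl⟩, rfl⟩

theorem p_mem_nb (p : PV n) (x : Submodule F2 (PV n)) : p ∈ nb p x :=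
  Submodule.mem_sup_right (Submodule.mem_span_singleton_self p)

theorem symp_add_left (a b c : PV n) : symp (a + b) c = symp a c + symp b c := by
  simp only [← sB_apply, map_add, LinearMap.add_apply]
theorem symp_add_right (a b c : PV n) : symp a (b + c) = symp a b + symp a c := by
  simp only [← sB_apply, map_add]
theorem symp_smul_left (r : F2) (a c : PV n) : symp (r • a) c = r * symp a c := by
  simp only [← sB_apply, map_smul, LinearMap.smul_apply, smul_eq_mul]
theorem symp_smul_right (r : F2) (a c : PV n) : symp a (r • c) = r * symp a c := by
  simp only [← sB_apply, map_smul, smul_eq_mul]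

theorem nb_isotropic {p : PV n} {x : Submodule F2 (PV n)} (hx : IsIsotropic x) :
    IsIsotropic (nb p x) := by
  intro a ha b hb
  rw [mem_nb] at ha hb
  obtain ⟨y, hy, hy0, c, rfl⟩ := ha
  obtain ⟨z, hz, hz0, d, rfl⟩ := hb
  simp [symp_add_left, symp_add_right, symp_smul_left, symp_smul_right, symp_self, hz0,
    symp_comm y p, hy0, hx y hy z hz]

theorem finrank_nb {p : PV n} {x : Submodule F2 (PV n)} (hx : x ∈ Lset n n) (hp : p ∉ x) :
    Module.finrank F2 (nb p x) = n := by
  have h1 := finrank_inf_ph (u := x) (p := p) (by rwa [perp_eq_self hx])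
  have h2 := Submodule.finrank_sup_add_finrank_inf_eq (x ⊓ ph p) (Submodule.span F2 {p})
  have hp0 : p ≠ 0 := by rintro rfl; exact hp x.zero_mem
  have h3 : (x ⊓ ph p) ⊓ Submodule.span F2 {p} = ⊥ := by
    rw [← disjoint_iff, Submodule.disjoint_span_singleton' hp0]
    exact fun h => hp h.1
  rw [h3, finrank_bot, finrank_span_singleton hp0, h1, hx.2] at h2
  exact h2

theorem nb_mem {p : PV n} {x : Submodule F2 (PV n)} (hx : x ∈ Lset n n) (hp : p ∉ x) :
    nb p x ∈ Lset n n := ⟨nb_isotropic hx.1, finrank_nb hx hp⟩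

theorem le_nb_iff {p : PV n} {u x : Submodule F2 (PV n)} (hx : IsIsotropic x) (hu : u ≤ x) :
    u ≤ nb p x ↔ p ∈ perp u := by
  constructor
  · intro h a ha
    exact nb_isotropic (p := p) hx a (h ha) p (p_mem_nb p x)
  · intro h a ha
    refine Submodule.mem_sup_left ⟨hu ha, ?_⟩
    change symp p a = 0
    rw [symp_comm]; exact h a ha

theorem inf_nb {p : PV n} {x : Submodule F2 (PV n)} (hx : x ∈ Lset n n) (hp : p ∉ x) :
    Module.finrank F2 ↥(x ⊓ nb p x) = n - 1 := by
  have h1 := finrank_inf_ph (u := x) (p := p) (by rwa [perp_eq_self hx])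
  have h2 : x ⊓ ph p ≤ x ⊓ nb p x := le_inf inf_le_left le_sup_left
  have h3 : x ⊓ nb p x < x := by
    refine lt_of_le_of_ne inf_le_left ?_
    intro h
    have h4 : x ≤ nb p x := inf_eq_left.mp h
    have := Submodule.eq_of_le_of_finrank_eq h4 (by rw [hx.2, finrank_nb hx hp])
    exact hp (this ▸ p_mem_nb p x)
  have h5 := Submodule.finrank_lt_finrank_of_lt h3
  have h6 := Submodule.finrank_mono h2
  have := hx.2
  omega

theorem eq_nb {p : PV n} {x y : Submodule F2 (PV n)} (hx : x ∈ Lset n n) (hy : y ∈ Lset n n)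
    (hxy : Module.finrank F2 ↥(x ⊓ y) = n - 1) (hp : p ∉ x) (hpy : p ∈ y) : y = nb p x := by
  have h1 := finrank_inf_ph (u := x) (p := p) (by rwa [perp_eq_self hx])
  have h2 : x ⊓ y ≤ x ⊓ ph p := fun a ha => ⟨ha.1, hy.1 p hpy a ha.2⟩
  have h3 : x ⊓ y = x ⊓ ph p := by
    apply Submodule.eq_of_le_of_finrank_eq h2
    have := hx.2
    omega
  symm
  apply Submodule.eq_of_le_of_finrank_eq
  · rw [nb, ← h3]
    apply sup_le inf_le_right
    rwa [Submodule.span_singleton_le_iff_mem]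
  · rw [finrank_nb hx hp, hy.2]

/-- Number of neighbours of `x` containing `u ≤ x`. -/
theorem count_nb {w : Submodule F2 (PV n)} (hn : 1 ≤ n) (x : GVtx n w) {u : Submodule F2 (PV n)}
    (hwu : w ≤ u) (hux : u ≤ x.1) :
    (univ.filter (fun y : GVtx n w =>
      Module.finrank F2 ↥(x.1 ⊓ y.1) = n - 1 ∧ u ≤ y.1)).card * 2 ^ (n - 1) + 2 ^ n
      = 2 ^ (2 * n - Module.finrank F2 u) := by
  have hx := x.2.1
  set Y := univ.filter (fun y : GVtx n w =>
      Module.finrank F2 ↥(x.1 ⊓ y.1) = n - 1 ∧ u ≤ y.1) with hY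
  set P := univ.filter (fun p : PV n => p ∈ perp u ∧ p ∉ x.1) with hP
  have hdc := Finset.sum_card_bipartiteAbove_eq_sum_card_bipartiteBelow
    (s := Y) (t := P) (fun (y : GVtx n w) (p : PV n) => p ∈ y.1)
  have hL : ∀ y ∈ Y, (P.bipartiteAbove (fun (y : GVtx n w) (p : PV n) => p ∈ y.1) y).card
      = 2 ^ (n - 1) := by
    intro y hy
    simp only [hY, Finset.mem_filter, Finset.mem_univ, true_and] at hy
    have h1 := card_sdiff_sub (S := y.1) (T := x.1)
    rw [inf_comm, hy.1, y.2.1.2] at h1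
    have h2 : P.bipartiteAbove (fun (y : GVtx n w) (p : PV n) => p ∈ y.1) y =
        univ.filter (fun p => p ∈ y.1 ∧ p ∉ x.1) := by
      ext p
      simp only [hP, Finset.mem_bipartiteAbove, Finset.mem_filter, Finset.mem_univ, true_and]
      constructor
      · tauto
      · rintro ⟨h3, h4⟩
        exact ⟨⟨fun a ha => y.2.1.1 a (hy.2 ha) p h3, h4⟩, h3⟩
    rw [h2]
    obtain ⟨m, rfl⟩ : ∃ m, n = m + 1 := ⟨n - 1, by omega⟩
    simp only [Nat.add_sub_cancel] at *
    rw [pow_succ] at h1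
    omega
  have hR : ∀ p ∈ P, (Y.bipartiteBelow (fun (y : GVtx n w) (p : PV n) => p ∈ y.1) p).card
      = 1 := by
    intro p hp
    simp only [hP, Finset.mem_filter, Finset.mem_univ, true_and] at hp
    rw [Finset.card_eq_one]
    have hu := (le_nb_iff hx.1 hux).2 hp.1
    refine ⟨⟨nb p x.1, nb_mem hx hp.2, hwu.trans hu⟩, ?_⟩
    ext y
    simp only [hY, Finset.mem_bipartiteBelow, Finset.mem_filter, Finset.mem_univ, true_and,
      Finset.mem_singleton]
    constructor
    · rintro ⟨⟨h1, h2⟩, h3⟩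
      exact Subtype.ext (eq_nb hx y.2.1 h1 hp.2 h3)
    · rintro rfl
      exact ⟨⟨inf_nb hx hp.2, hu⟩, p_mem_nb _ _⟩
  rw [Finset.sum_congr rfl hL, Finset.sum_congr rfl hR] at hdc
  simp only [Finset.sum_const, smul_eq_mul, mul_one] at hdc
  rw [hdc]
  have h1 := card_sdiff_sub (S := perp u) (T := x.1)
  have h2 : x.1 ≤ perp u := fun p hp a ha => hx.1 a (hux ha) p hp
  rw [inf_eq_right.2 h2, hx.2, finrank_perp] at h1
  exact h1

/-- hyperplanes of `u` containing `w`. -/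
noncomputable def hyps (w u : Submodule F2 (PV n)) : Finset (Submodule F2 (PV n)) :=
  univ.filter (fun v => w ≤ v ∧ v ≤ u ∧ Module.finrank F2 v + 1 = Module.finrank F2 u)

theorem mem_hyps {w u v : Submodule F2 (PV n)} :
    v ∈ hyps w u ↔ w ≤ v ∧ v ≤ u ∧ Module.finrank F2 v + 1 = Module.finrank F2 u := by
  simp [hyps]

theorem count_hyps {w u : Submodule F2 (PV n)} (hwu : w ≤ u) :
    (hyps w u).card * 2 ^ (2 * n - Module.finrank F2 u) + 2 ^ (2 * n - Module.finrank F2 u)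
      = 2 ^ (2 * n - Module.finrank F2 w) := by
  have hle : Module.finrank F2 u ≤ 2 * n := by
    rw [← finrank_PV]; exact Submodule.finrank_le u
  set P := univ.filter (fun p : PV n => p ∈ perp w ∧ p ∉ perp u) with hP
  have hdc := Finset.sum_card_bipartiteAbove_eq_sum_card_bipartiteBelow
    (s := hyps w u) (t := P) (fun v (p : PV n) => p ∈ perp v)
  have hL : ∀ v ∈ hyps w u, (P.bipartiteAbove (fun v (p : PV n) => p ∈ perp v) v).card
      = 2 ^ (2 * n - Module.finrank F2 u) := by
    intro v hv
    rw [mem_hyps] at hv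
    have h1 := card_sdiff_sub (S := perp v) (T := perp u)
    rw [inf_eq_right.2 (perp_anti hv.2.1), finrank_perp, finrank_perp] at h1
    have h2 : P.bipartiteAbove (fun v (p : PV n) => p ∈ perp v) v =
        univ.filter (fun p => p ∈ perp v ∧ p ∉ perp u) := by
      ext p
      simp only [hP, Finset.mem_bipartiteAbove, Finset.mem_filter, Finset.mem_univ, true_and]
      constructor
      · tauto
      · rintro ⟨h3, h4⟩
        exact ⟨⟨perp_anti hv.1 h3, h4⟩, h3⟩
    rw [h2]
    have h3 : 2 * n - Module.finrank F2 v = 2 * n - Module.finrank F2 u + 1 := by omega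
    rw [h3, pow_succ] at h1
    omega
  have hR : ∀ p ∈ P, ((hyps w u).bipartiteBelow (fun v (p : PV n) => p ∈ perp v) p).card
      = 1 := by
    intro p hp
    simp only [hP, Finset.mem_filter, Finset.mem_univ, true_and] at hp
    rw [Finset.card_eq_one]
    have hr := finrank_inf_ph hp.2
    refine ⟨u ⊓ ph p, ?_⟩
    ext v
    simp only [mem_hyps, Finset.mem_bipartiteBelow, Finset.mem_singleton]
    constructor
    · rintro ⟨⟨h1, h2, h3⟩, h4⟩
      apply Submodule.eq_of_le_of_finrank_eq
      · intro a ha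
        refine ⟨h2 ha, ?_⟩
        change symp p a = 0
        rw [symp_comm]; exact h4 a ha
      · omega
    · rintro rfl
      refine ⟨⟨fun a ha => ⟨hwu ha, ?_⟩, inf_le_left, hr⟩, fun a ha => ?_⟩
      · change symp p a = 0
        rw [symp_comm]; exact hp.1 a ha
      · change symp a p = 0
        rw [symp_comm]; exact ha.2
  rw [Finset.sum_congr rfl hL, Finset.sum_congr rfl hR] at hdc
  simp only [Finset.sum_const, smul_eq_mul, mul_one] at hdc
  rw [hdc]
  have h1 := card_sdiff_sub (S := perp w) (T := perp u)
  rw [inf_eq_right.2 (perp_anti hwu), finrank_perp, finrank_perp] at h1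
  exact h1

noncomputable def chi (w u : Submodule F2 (PV n)) : GVtx n w → ℝ :=
  fun x => if u ≤ x.1 then 1 else 0

noncomputable def theta (n j : ℕ) : ℝ := 2 ^ (n + 1 - j) - 2 ^ (j - 1) - 1

theorem mulVec_chi (w u : Submodule F2 (PV n)) (x : GVtx n w) :
    (adjG n w (n - 1)).mulVec (chi w u) x = ((univ.filter (fun y : GVtx n w =>
      Module.finrank F2 ↥(x.1 ⊓ y.1) = n - 1 ∧ u ≤ y.1)).card : ℝ) := by
  rw [Finset.card_filter]
  push_cast
  rw [Matrix.mulVec, dotProduct]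
  apply Finset.sum_congr rfl
  intro y _
  simp only [adjG, adjMat, chi]
  split_ifs <;> simp_all

theorem sum_hyps (w u : Submodule F2 (PV n)) (x : GVtx n w) :
    ∑ v ∈ hyps w u, chi w v x = (((hyps w u).filter (fun v => v ≤ x.1)).card : ℝ) := by
  rw [Finset.card_filter]
  push_cast
  rfl

theorem key_in {w : Submodule F2 (PV n)} (hw : w ∈ Lset n 1) {u : Submodule F2 (PV n)}
    (hwu : w ≤ u) (x : GVtx n w) (hux : u ≤ x.1) :
    (adjG n w (n - 1)).mulVec (chi w u) x
      = theta n (Module.finrank F2 u) * chi w u x + ∑ v ∈ hyps w u, chi w v x := by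
  have hj1 : 1 ≤ Module.finrank F2 u := by rw [← hw.2]; exact Submodule.finrank_mono hwu
  have hjn : Module.finrank F2 u ≤ n := by
    have := Submodule.finrank_mono hux
    rwa [x.2.1.2] at this
  have h1 := count_nb (by omega) x hwu hux
  have h2 := count_hyps hwu
  rw [mulVec_chi, sum_hyps]
  have h3 : (hyps w u).filter (fun v => v ≤ x.1) = hyps w u := by
    apply Finset.filter_true_of_mem
    intro v hv
    exact (mem_hyps.1 hv).2.1.trans hux
  rw [h3, hw.2] at *
  generalize (univ.filter (fun y : GVtx n w =>
      Module.finrank F2 ↥(x.1 ⊓ y.1) = n - 1 ∧ u ≤ y.1)).card = c at *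
  generalize (hyps w u).card = d at *
  simp only [chi, if_pos hux, theta]
  generalize Module.finrank F2 u = j at *
  obtain ⟨i, rfl⟩ : ∃ i, j = i + 1 := ⟨j - 1, by omega⟩
  obtain ⟨m, rfl⟩ : ∃ m, n = i + 1 + m := ⟨n - (i + 1), by omega⟩
  have e1 : 2 * (i + 1 + m) - (i + 1) = (i + m) + (m + 1) := by omega
  have e2 : i + 1 + m - 1 = i + m := by omega
  have e3 : i + 1 + m = (i + m) + 1 := by omega
  have e4 : 2 * (i + 1 + m) - 1 = (i + m + (m + 1)) + i := by omega
  have e5 : i + 1 + m + 1 - (i + 1) = m + 1 := by omega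
  rw [e1, e2, e3, pow_succ 2 (i + m), pow_add 2 (i + m)] at h1
  rw [e1, e4, pow_add 2 _ i] at h2
  have h1' : c + 2 = 2 ^ (m + 1) := by
    apply Nat.eq_of_mul_eq_mul_right (pow_pos two_pos (i + m))
    linarith
  have h2' : d + 1 = 2 ^ i := by
    apply Nat.eq_of_mul_eq_mul_right (pow_pos two_pos (i + m + (m + 1)))
    linarith
  rw [e5, Nat.add_sub_cancel]
  have h1'' : (c : ℝ) + 2 = 2 ^ (m + 1) := by exact_mod_cast h1'
  have h2'' : (d : ℝ) + 1 = 2 ^ i := by exact_mod_cast h2'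
  linarith

theorem key_out {w : Submodule F2 (PV n)} (hw : w ∈ Lset n 1) {u : Submodule F2 (PV n)}
    (hu : IsIsotropic u) (hwu : w ≤ u) (x : GVtx n w) (hux : ¬ u ≤ x.1) :
    (adjG n w (n - 1)).mulVec (chi w u) x
      = theta n (Module.finrank F2 u) * chi w u x + ∑ v ∈ hyps w u, chi w v x := by
  have hj1 : 1 ≤ Module.finrank F2 u := by rw [← hw.2]; exact Submodule.finrank_mono hwu
  have hn1 : 1 ≤ n := by
    have := Submodule.finrank_mono x.2.2
    rwa [hw.2, x.2.1.2] at this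
  rw [mulVec_chi, sum_hyps]
  simp only [chi, if_neg hux, mul_zero, zero_add]
  congr 1
  obtain ⟨p, hpu, hpx⟩ := SetLike.not_le_iff_exists.1 hux
  have hlt : x.1 ⊓ u < u := lt_of_le_of_ne inf_le_right (fun h => hux (inf_eq_right.1 h))
  have hlt' := Submodule.finrank_lt_finrank_of_lt hlt
  by_cases hd : Module.finrank F2 ↥(x.1 ⊓ u) + 1 = Module.finrank F2 u
  · have hunb : u ≤ nb p x.1 := by
      have h1 : x.1 ⊓ u < (x.1 ⊓ u) ⊔ Submodule.span F2 {p} := by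
        refine lt_of_le_of_ne le_sup_left ?_
        intro h
        have : p ∈ x.1 ⊓ u := by
          rw [h]
          exact Submodule.mem_sup_right (Submodule.mem_span_singleton_self p)
        exact hpx this.1
      have h2 := Submodule.finrank_lt_finrank_of_lt h1
      have h3 : (x.1 ⊓ u) ⊔ Submodule.span F2 {p} = u := by
        apply Submodule.eq_of_le_of_finrank_le
        · apply sup_le inf_le_right
          rwa [Submodule.span_singleton_le_iff_mem]
        · omega
      rw [← h3, nb]
      apply sup_le_sup_right
      exact fun a ha => ⟨ha.1, hu p hpu a ha.2⟩
    have hA : (hyps w u).filter (fun v => v ≤ x.1) = {x.1 ⊓ u} := by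
      ext v
      simp only [Finset.mem_filter, mem_hyps, Finset.mem_singleton]
      constructor
      · rintro ⟨⟨h1, h2, h3⟩, h4⟩
        exact Submodule.eq_of_le_of_finrank_eq (le_inf h4 h2) (by omega)
      · rintro rfl
        exact ⟨⟨le_inf x.2.2 hwu, inf_le_right, hd⟩, inf_le_left⟩
    have hB : (univ.filter (fun y : GVtx n w =>
      Module.finrank F2 ↥(x.1 ⊓ y.1) = n - 1 ∧ u ≤ y.1)) =
        {⟨nb p x.1, nb_mem x.2.1 hpx, hwu.trans hunb⟩} := by
      ext y
      simp only [Finset.mem_filter, Finset.mem_univ, true_and, Finset.mem_singleton]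
      constructor
      · rintro ⟨h1, h2⟩
        exact Subtype.ext (eq_nb x.2.1 y.2.1 h1 hpx (h2 hpu))
      · rintro rfl
        exact ⟨inf_nb x.2.1 hpx, hunb⟩
    rw [hA, hB, Finset.card_singleton, Finset.card_singleton]
  · have hA : (hyps w u).filter (fun v => v ≤ x.1) = ∅ := by
      apply Finset.filter_false_of_mem
      intro v hv h4
      obtain ⟨h1, h2, h3⟩ := mem_hyps.1 hv
      have := Submodule.finrank_mono (le_inf h4 h2)
      omega
    have hB : (univ.filter (fun y : GVtx n w =>
      Module.finrank F2 ↥(x.1 ⊓ y.1) = n - 1 ∧ u ≤ y.1)) = ∅ := by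
      apply Finset.filter_false_of_mem
      rintro y - ⟨h1, h2⟩
      have h3 := Submodule.finrank_sup_add_finrank_inf_eq u (x.1 ⊓ y.1)
      have h4 : Module.finrank F2 ↥(u ⊔ (x.1 ⊓ y.1)) ≤ n := by
        have := Submodule.finrank_mono (sup_le h2 (inf_le_right : x.1 ⊓ y.1 ≤ y.1))
        rwa [y.2.1.2] at this
      have h5 : Module.finrank F2 ↥(u ⊓ (x.1 ⊓ y.1)) ≤ Module.finrank F2 ↥(x.1 ⊓ u) :=
        Submodule.finrank_mono (le_inf (inf_le_right.trans inf_le_left) inf_le_left)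
      omega
    rw [hA, hB]; rfl

theorem key {w : Submodule F2 (PV n)} (hw : w ∈ Lset n 1) {u : Submodule F2 (PV n)}
    (hu : IsIsotropic u) (hwu : w ≤ u) (x : GVtx n w) :
    (adjG n w (n - 1)).mulVec (chi w u) x
      = theta n (Module.finrank F2 u) * chi w u x + ∑ v ∈ hyps w u, chi w v x := by
  by_cases h : u ≤ x.1
  · exact key_in hw hwu x h
  · exact key_out hw hu hwu x h

theorem adjG_symm (w : Submodule F2 (PV n)) (k : ℕ) : (adjG n w k).transpose = adjG n w k := by
  ext x y
  simp only [Matrix.transpose_apply, adjG, adjMat]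
  have h : (Module.finrank F2 ↥(y.1 ⊓ x.1) = k) ↔ (Module.finrank F2 ↥(x.1 ⊓ y.1) = k) := by
    rw [inf_comm]
  by_cases hk : Module.finrank F2 ↥(x.1 ⊓ y.1) = k
  · rw [if_pos hk, if_pos (h.2 hk)]
  · rw [if_neg hk, if_neg (fun h' => hk (h.1 h'))]

theorem eig_step {w : Submodule F2 (PV n)} (hw : w ∈ Lset n 1) {u : Submodule F2 (PV n)}
    (hu : IsIsotropic u) (hwu : w ≤ u) {f : GVtx n w → ℝ} {μ : ℝ}
    (hf : (adjG n w (n - 1)).mulVec f = μ • f)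
    (hv : ∀ v ∈ hyps w u, chi w v ⬝ᵥ f = 0) (hμ : μ ≠ theta n (Module.finrank F2 u)) :
    chi w u ⬝ᵥ f = 0 := by
  have h1 : chi w u ⬝ᵥ (adjG n w (n - 1)).mulVec f = μ * (chi w u ⬝ᵥ f) := by
    rw [hf, dotProduct_smul, smul_eq_mul]
  have h2 : (adjG n w (n - 1)).mulVec (chi w u) =
      theta n (Module.finrank F2 u) • chi w u + ∑ v ∈ hyps w u, chi w v := by
    ext x
    rw [key hw hu hwu x]
    simp
  rw [Matrix.dotProduct_mulVec, ← Matrix.mulVec_transpose, adjG_symm, h2, add_dotProduct,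
    smul_dotProduct, sum_dotProduct, Finset.sum_eq_zero hv, add_zero, smul_eq_mul] at h1
  have h3 : (μ - theta n (Module.finrank F2 u)) * (chi w u ⬝ᵥ f) = 0 := by linarith
  exact (mul_eq_zero.1 h3).resolve_left (sub_ne_zero.2 hμ)

theorem eig_mem {w : Submodule F2 (PV n)} (hw : w ∈ Lset n 1) {μ : ℝ}
    (h : μ ∈ eigSet (adjG n w (n - 1))) : ∃ j, 1 ≤ j ∧ j ≤ n ∧ μ = theta n j := by
  by_contra hcon
  push Not at hcon
  obtain ⟨f, hf0, hf⟩ := h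
  apply hf0
  have hall : ∀ j, ∀ u : Submodule F2 (PV n), IsIsotropic u → w ≤ u → j ≤ n →
      Module.finrank F2 u = j → chi w u ⬝ᵥ f = 0 := by
    intro j
    induction j with
    | zero =>
      intro u _ hwu _ h0
      have := Submodule.finrank_mono hwu
      rw [hw.2] at this
      omega
    | succ j ih =>
      intro u hu hwu hjn h0
      apply eig_step hw hu hwu hf
      · intro v hv
        obtain ⟨h1, h2, h3⟩ := mem_hyps.1 hv
        exact ih v (isotropic_of_le hu h2) h1 (by omega) (by omega)
      · rw [h0]
        exact hcon _ (by omega) hjn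
  ext x
  have h1 := hall n x.1 x.2.1.1 x.2.2 le_rfl x.2.1.2
  have h2 : chi w x.1 = Pi.single x 1 := by
    ext y
    simp only [chi, Pi.single_apply]
    congr 1
    apply propext
    constructor
    · intro h
      exact Subtype.ext (Submodule.eq_of_le_of_finrank_eq h (by rw [x.2.1.2, y.2.1.2])).symm
    · rintro rfl; exact le_rfl
  rw [h2, single_dotProduct, one_mul] at h1
  exact h1

theorem exists_max {n : ℕ} : ∀ (k j : ℕ) (u : Submodule F2 (PV n)), IsIsotropic u →
    Module.finrank F2 u = j → j + k ≤ n →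
    ∃ x, u ≤ x ∧ IsIsotropic x ∧ Module.finrank F2 x = j + k := by
  intro k
  induction k with
  | zero => intro j u hu hj _; exact ⟨u, le_rfl, hu, hj⟩
  | succ k ih =>
    intro j u hu hj hle
    obtain ⟨y, huy, hy, hyr⟩ := ih j u hu hj (by omega)
    have hlt : y < perp y := by
      refine lt_of_le_of_ne (le_perp_self hy) ?_
      intro h
      have h2 := finrank_perp y
      rw [← h] at h2
      omega
    obtain ⟨p, hp, hpy⟩ := SetLike.exists_of_lt hlt
    have hp0 : p ≠ 0 := by rintro rfl; exact hpy y.zero_mem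
    refine ⟨y ⊔ Submodule.span F2 {p}, huy.trans le_sup_left, ?_, ?_⟩
    · intro a ha b hb
      rw [Submodule.mem_sup] at ha hb
      obtain ⟨y1, hy1, z1, hz1, rfl⟩ := ha
      obtain ⟨y2, hy2, z2, hz2, rfl⟩ := hb
      obtain ⟨c, rfl⟩ := Submodule.mem_span_singleton.1 hz1
      obtain ⟨d, rfl⟩ := Submodule.mem_span_singleton.1 hz2
      have e1 : symp y1 p = 0 := hp y1 hy1
      have e2 : symp y2 p = 0 := hp y2 hy2
      simp [symp_add_left, symp_add_right, symp_smul_left, symp_smul_right, symp_self, e1,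
        symp_comm p y2, e2, hy y1 hy1 y2 hy2]
    · have h2 := Submodule.finrank_sup_add_finrank_inf_eq y (Submodule.span F2 {p})
      have h3 : y ⊓ Submodule.span F2 {p} = ⊥ := by
        rw [← disjoint_iff, Submodule.disjoint_span_singleton' hp0]
        exact hpy
      rw [h3, finrank_bot, finrank_span_singleton hp0] at h2
      omega

theorem theta_one : theta n 1 = 2 ^ n - 2 := by
  simp [theta]; ring

theorem eig_one {w : Submodule F2 (PV n)} (hw : w ∈ Lset n 1) (hn : 2 ≤ n) :
    theta n 1 ∈ eigSet (adjG n w (n - 1)) := by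
  obtain ⟨x, hx1, hx2, hx3⟩ := exists_max (n - 1) 1 w hw.1 hw.2 (by omega)
  let X : GVtx n w := ⟨x, ⟨hx2, by omega⟩, hx1⟩
  refine ⟨chi w w, ?_, ?_⟩
  · intro h
    have := congrFun h X
    simp [chi, X, hx1] at this
  · ext y
    rw [key hw hw.1 le_rfl y, hw.2]
    have : hyps w w = ∅ := by
      ext v
      simp only [mem_hyps, Finset.notMem_empty, iff_false]
      rintro ⟨h1, h2, h3⟩
      have := Submodule.finrank_mono h1
      omega
    simp [this]

theorem eig_two {w : Submodule F2 (PV n)} (hw : w ∈ Lset n 1) (hn : 2 ≤ n) :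
    theta n 2 ∈ eigSet (adjG n w (n - 1)) := by
  obtain ⟨u, hu1, hu2, hu3⟩ := exists_max 1 1 w hw.1 hw.2 (by omega)
  obtain ⟨x, hx1, hx2, hx3⟩ := exists_max (n - 2) 2 u hu2 hu3 (by omega)
  let X : GVtx n w := ⟨x, ⟨hx2, by omega⟩, hu1.trans hx1⟩
  have hone : ∀ y : GVtx n w, chi w w y = 1 := fun y => if_pos y.2.2
  have hhyp : hyps w u = {w} := by
    ext v
    simp only [mem_hyps, Finset.mem_singleton]
    constructor
    · rintro ⟨h1, h2, h3⟩
      exact (Submodule.eq_of_le_of_finrank_eq h1 (by rw [hw.2]; omega)).symm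
    · rintro rfl
      exact ⟨le_rfl, hu1, by rw [hw.2, hu3]⟩
  have hhyp1 : hyps w w = ∅ := by
    ext v
    simp only [mem_hyps, Finset.notMem_empty, iff_false]
    rintro ⟨h1, h2, h3⟩
    have := Submodule.finrank_mono h1
    omega
  have hD : 0 < theta n 1 - theta n 2 - 1 := by
    obtain ⟨m, rfl⟩ : ∃ m, n = m + 2 := ⟨n - 2, by omega⟩
    have e1 : m + 2 + 1 - 1 = m + 2 := by omega
    have e2 : m + 2 + 1 - 2 = m + 1 := by omega
    simp only [theta, e1, e2]
    norm_num
    have : (0:ℝ) < 2 ^ m := by positivity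
    rw [pow_succ, pow_succ]
    linarith
  refine ⟨(theta n 1 - theta n 2) • chi w u - chi w w, ?_, ?_⟩
  · intro h
    have := congrFun h X
    simp [chi, X, hx1, hu1.trans hx1] at this
    linarith
  · ext y
    rw [Matrix.mulVec_sub, Matrix.mulVec_smul]
    simp only [Pi.sub_apply, Pi.smul_apply, smul_eq_mul]
    rw [key hw hw.1 le_rfl y, key hw hu2 hu1 y, hw.2, hu3, hhyp, hhyp1]
    simp only [Finset.sum_singleton, Finset.sum_empty, hone]
    ring

theorem theta_two (hn : 2 ≤ n) : theta n 2 = 2 ^ n / 2 - 3 := by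
  obtain ⟨m, rfl⟩ : ∃ m, n = m + 2 := ⟨n - 2, by omega⟩
  have e2 : m + 2 + 1 - 2 = m + 1 := by omega
  simp only [theta, e2]
  norm_num
  ring

theorem abs_theta {j : ℕ} (hj : 2 ≤ j) (hjn : j ≤ n) : |theta n j| ≤ 2 ^ n / 2 - 1 := by
  obtain ⟨i, rfl⟩ : ∃ i, j = i + 2 := ⟨j - 2, by omega⟩
  obtain ⟨m, rfl⟩ : ∃ m, n = i + 2 + m := ⟨n - (i + 2), by omega⟩
  have e1 : i + 2 + m + 1 - (i + 2) = m + 1 := by omega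
  have e2 : i + 2 - 1 = i + 1 := by omega
  simp only [theta, e1, e2]
  have h1 : (1:ℝ) ≤ 2 ^ m := one_le_pow₀ (by norm_num)
  have h2 : (1:ℝ) ≤ 2 ^ i := one_le_pow₀ (by norm_num)
  have h3 : (2:ℝ) ^ (i + 2 + m) = 4 * (2 ^ i * 2 ^ m) := by rw [pow_add, pow_add]; ring
  rw [h3, pow_succ, pow_succ, abs_le]
  constructor <;> nlinarith

theorem spec_bounds {w : Submodule F2 (PV n)} (hw : w ∈ Lset n 1) (hn : 4 ≤ n) :
    maxEig (adjG n w (n - 1)) = 2 ^ n - 2 ∧ 2 ^ n / 2 - 3 ≤ specParam (adjG n w (n - 1)) ∧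
      specParam (adjG n w (n - 1)) ≤ 2 ^ n / 2 - 1 := by
  have hN : (16:ℝ) ≤ 2 ^ n := by
    calc (16:ℝ) = 2 ^ 4 := by norm_num
      _ ≤ 2 ^ n := pow_le_pow_right₀ (by norm_num) hn
  have h1 := eig_one hw (by omega)
  have h2 := eig_two hw (by omega)
  have hcase : ∀ μ ∈ eigSet (adjG n w (n - 1)), μ = 2 ^ n - 2 ∨ |μ| ≤ 2 ^ n / 2 - 1 := by
    intro μ hμ
    obtain ⟨j, hj1, hjn, rfl⟩ := eig_mem hw hμ
    rcases Nat.lt_or_ge j 2 with h | h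
    · left
      have : j = 1 := by omega
      rw [this, theta_one]
    · right; exact abs_theta h hjn
  rw [theta_one] at h1
  rw [theta_two (by omega)] at h2
  have hg : IsGreatest (eigSet (adjG n w (n - 1))) (2 ^ n - 2) := by
    refine ⟨h1, fun μ hμ => ?_⟩
    rcases hcase μ hμ with h | h
    · exact h.le
    · have := le_abs_self μ
      linarith
  have hga : IsGreatest (abs '' eigSet (adjG n w (n - 1))) (2 ^ n - 2) := by
    refine ⟨⟨_, h1, abs_of_nonneg (by linarith)⟩, ?_⟩
    rintro _ ⟨μ, hμ, rfl⟩
    rcases hcase μ hμ with h | h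
    · rw [h, abs_of_nonneg (by linarith)]
    · linarith
  refine ⟨hg.csSup_eq, ?_⟩
  rw [specParam, hga.csSup_eq]
  have hub : ∀ a ∈ (abs '' eigSet (adjG n w (n - 1))) \ {(2:ℝ) ^ n - 2}, a ≤ 2 ^ n / 2 - 1 := by
    rintro _ ⟨⟨μ, hμ, rfl⟩, hne⟩
    rcases hcase μ hμ with h | h
    · exfalso
      apply hne
      rw [h, abs_of_nonneg (by linarith)]
      rfl
    · exact h
  have hmem : (2:ℝ) ^ n / 2 - 3 ∈ (abs '' eigSet (adjG n w (n - 1))) \ {(2:ℝ) ^ n - 2} := by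
    refine ⟨⟨_, h2, abs_of_nonneg (by linarith)⟩, ?_⟩
    intro h
    have h' : (2:ℝ) ^ n / 2 - 3 = 2 ^ n - 2 := h
    linarith
  exact ⟨le_csSup ⟨_, hub⟩ hmem, csSup_le ⟨_, hmem⟩ hub⟩

end Aux

/-- **The spectral ratio of `G'_n` tends to `1/2`** (equivalently, `log₂ R_n → −1`), where
`G'_n` is the graph on the maximal isotropic subspaces containing a fixed `w ∈ L^n_1` with
`x ∼ y` iff `dim(x∩y) = n−1`. -/
theorem spectral_ratio_G'_tendsto_half :
    ∀ ε : ℝ, 0 < ε → ∃ N : ℕ, ∀ n : ℕ, N ≤ n → ∀ w ∈ Lset n 1,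
      |specParam (adjG n w (n - 1)) / maxEig (adjG n w (n - 1)) - 1 / 2| < ε := by

  intro ε hε
  obtain ⟨N, hN⟩ := pow_unbounded_of_one_lt (2 / ε + 2) (by norm_num : (1:ℝ) < 2)
  refine ⟨max N 4, fun n hn w hw => ?_⟩
  have hn4 : 4 ≤ n := le_trans (le_max_right _ _) hn
  obtain ⟨h1, h2, h3⟩ := spec_bounds hw hn4
  have h4 : (2:ℝ) ^ N ≤ 2 ^ n :=
    pow_le_pow_right₀ (by norm_num) (le_trans (le_max_left _ _) hn)
  rw [h1]
  have h5 : 2 / ε < 2 ^ n - 2 := by linarith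
  have h0 : 0 < 2 / ε := by positivity
  have h6 : (0:ℝ) < 2 ^ n - 2 := by linarith
  have h7 : 2 < (2 ^ n - 2) * ε := by rwa [div_lt_iff₀ hε] at h5
  rw [abs_lt]
  constructor
  · rw [lt_sub_iff_add_lt, lt_div_iff₀ h6]
    linarith
  · rw [sub_lt_iff_lt_add, div_lt_iff₀ h6]
    linarith
end

section
/- Let n ≥ 4 be even, let w be a one-dimensional isotropic subspace of (ZMod 2)^{2n}, and let G_w be the graph whose vertices are the maximal isotropic subspaces x with w ⊆ x, with x adjacent to y iff dim(x∩y) = n/2. Then the spectral ratio of G_w equals 2^{−n/2}; i.e. λ(G_w)/max Spec(G_w) = 2^{−n/2}. -/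
open Finset

open scoped Classical

namespace SRG

noncomputable abbrev fr {n : ℕ} (S : Submodule F2 (PV n)) : ℕ := Module.finrank F2 S

/-- The symplectic form as a bilinear form. -/
def Bf (n : ℕ) : LinearMap.BilinForm F2 (PV n) :=
  LinearMap.mk₂ F2 symp
    (by intro a a' b
        simp only [symp, Prod.fst_add, Prod.snd_add, Pi.add_apply, add_mul, Finset.sum_add_distrib]
        ring)
    (by intro c a b
        simp only [symp, Prod.smul_fst, Prod.smul_snd, Pi.smul_apply, smul_eq_mul, mul_add,
          Finset.mul_sum, mul_assoc])
    (by intro a b b'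
        simp only [symp, Prod.fst_add, Prod.snd_add, Pi.add_apply, mul_add, Finset.sum_add_distrib]
        ring)
    (by intro c a b
        simp only [symp, Prod.smul_fst, Prod.smul_snd, Pi.smul_apply, smul_eq_mul, mul_add,
          Finset.mul_sum, mul_left_comm])

lemma Bf_apply {n : ℕ} (a b : PV n) : Bf n a b = symp a b := rfl

lemma symp_comm {n : ℕ} (a b : PV n) : symp a b = symp b a := by
  simp only [symp]
  rw [add_comm]
  congr 1 <;> exact Finset.sum_congr rfl (fun i _ => mul_comm _ _)

lemma symp_self {n : ℕ} (a : PV n) : symp a a = 0 := by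
  simp only [symp]
  have : ∑ i, a.2 i * a.1 i = ∑ i, a.1 i * a.2 i :=
    Finset.sum_congr rfl (fun i _ => mul_comm _ _)
  rw [this]
  exact CharTwo.add_self_eq_zero _

lemma Bf_refl (n : ℕ) : (Bf n).IsRefl := by
  intro a b h
  rw [Bf_apply] at *
  rw [symp_comm]; exact h

lemma Bf_sep {n : ℕ} (a : PV n) (h : ∀ b, symp a b = 0) : a = 0 := by
  ext i
  · have := h (0, Pi.single i 1)
    simpa [symp, Pi.single_apply] using this
  · have := h (Pi.single i 1, 0)
    simpa [symp, Pi.single_apply] using this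

lemma Bf_nondeg (n : ℕ) : (Bf n).Nondegenerate := by
  constructor
  · intro a h; exact Bf_sep a h
  · intro a h
    refine Bf_sep a (fun b => ?_)
    rw [symp_comm]; exact h b

/-- The symplectic complement. -/
def perp {n : ℕ} (S : Submodule F2 (PV n)) : Submodule F2 (PV n) := (Bf n).orthogonal S

lemma mem_perp {n : ℕ} {S : Submodule F2 (PV n)} {v : PV n} :
    v ∈ perp S ↔ ∀ s ∈ S, symp s v = 0 := Iff.rfl

lemma fr_top (n : ℕ) : Module.finrank F2 (PV n) = 2 * n := by
  simp [two_mul]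

lemma fr_le {n : ℕ} (S : Submodule F2 (PV n)) : fr S ≤ 2 * n := by
  rw [← fr_top n]; exact Submodule.finrank_le S

lemma fr_perp {n : ℕ} (S : Submodule F2 (PV n)) : fr S + fr (perp S) = 2 * n := by
  have h := LinearMap.BilinForm.finrank_orthogonal (Bf_nondeg n) S
  have h2 := fr_le S
  rw [fr_top] at h
  unfold fr perp at *
  omega

lemma perp_perp {n : ℕ} (S : Submodule F2 (PV n)) : perp (perp S) = S :=
  LinearMap.BilinForm.orthogonal_orthogonal (Bf_nondeg n) (Bf_refl n) S

lemma perp_anti {n : ℕ} {S T : Submodule F2 (PV n)} (h : S ≤ T) : perp T ≤ perp S :=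
  LinearMap.BilinForm.orthogonal_le h

lemma perp_sup {n : ℕ} (S T : Submodule F2 (PV n)) : perp (S ⊔ T) = perp S ⊓ perp T := by
  apply le_antisymm
  · exact le_inf (perp_anti le_sup_left) (perp_anti le_sup_right)
  · rintro v ⟨h1, h2⟩ s hs
    obtain ⟨a, ha, b, hb, rfl⟩ := Submodule.mem_sup.1 hs
    have e1 := h1 a ha
    have e2 := h2 b hb
    have e3 : symp (a + b) v = symp a v + symp b v :=
      LinearMap.BilinForm.add_left (B := Bf n) a b v
    show symp (a + b) v = 0
    rw [e3]
    have e4 : symp a v = 0 := e1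
    have e5 : symp b v = 0 := e2
    rw [e4, e5, add_zero]

lemma iso_iff {n : ℕ} {S : Submodule F2 (PV n)} : IsIsotropic S ↔ S ≤ perp S :=
  ⟨fun h _ hy x hx => h x hx _ hy, fun h x hx y hy => h hy x hx⟩

lemma iso_mono {n : ℕ} {S T : Submodule F2 (PV n)} (h : S ≤ T) (hT : IsIsotropic T) :
    IsIsotropic S := fun x hx y hy => hT x (h hx) y (h hy)

lemma fr_mono {n : ℕ} {S T : Submodule F2 (PV n)} (h : S ≤ T) : fr S ≤ fr T :=
  Submodule.finrank_mono h

lemma eq_of_fr {n : ℕ} {S T : Submodule F2 (PV n)} (h : S ≤ T) (h2 : fr T ≤ fr S) : S = T :=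
  Submodule.eq_of_le_of_finrank_le h h2

lemma iso_fr {n : ℕ} {S : Submodule F2 (PV n)} (h : IsIsotropic S) : fr S ≤ n := by
  have := fr_mono (iso_iff.1 h)
  have := fr_perp S
  omega

lemma perp_max {n : ℕ} {x : Submodule F2 (PV n)} (hx : x ∈ Lset n n) : perp x = x := by
  symm
  apply eq_of_fr (iso_iff.1 hx.1)
  have := fr_perp x
  have h2 : fr x = n := hx.2
  omega

lemma sup_inf_fr {n : ℕ} (S T : Submodule F2 (PV n)) :
    fr (S ⊔ T) + fr (S ⊓ T) = fr S + fr T := Submodule.finrank_sup_add_finrank_inf_eq S T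

/-- adjoin a vector -/
def adj {n : ℕ} (S : Submodule F2 (PV n)) (v : PV n) : Submodule F2 (PV n) :=
  S ⊔ Submodule.span F2 {v}

lemma le_adj {n : ℕ} (S : Submodule F2 (PV n)) (v : PV n) : S ≤ adj S v := le_sup_left

lemma mem_adj {n : ℕ} (S : Submodule F2 (PV n)) (v : PV n) : v ∈ adj S v :=
  Submodule.mem_sup_right (Submodule.mem_span_singleton_self v)

lemma adj_le {n : ℕ} {S T : Submodule F2 (PV n)} {v : PV n} (h : S ≤ T) (hv : v ∈ T) :
    adj S v ≤ T := sup_le h (by rwa [Submodule.span_singleton_le_iff_mem])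

lemma fr_lt {n : ℕ} {S T : Submodule F2 (PV n)} (h : S ≤ T) {v : PV n} (hv : v ∈ T) (hv' : v ∉ S) :
    fr S < fr T := by
  apply Submodule.finrank_lt_finrank_of_lt
  exact lt_of_le_of_ne h (by rintro rfl; exact hv' hv)

lemma fr_adj {n : ℕ} {S : Submodule F2 (PV n)} {v : PV n} (hv : v ∉ S) :
    fr (adj S v) = fr S + 1 := by
  have h1 := fr_lt (le_adj S v) (mem_adj S v) hv
  have h2 := sup_inf_fr S (Submodule.span F2 {v})
  have h3 : fr (Submodule.span F2 {v}) ≤ 1 := by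
    have := finrank_span_le_card (R := F2) ({v} : Set (PV n))
    simpa using this
  unfold adj at *
  omega

lemma iso_sup {n : ℕ} {S T : Submodule F2 (PV n)} (hS : IsIsotropic S) (hT : IsIsotropic T)
    (h : T ≤ perp S) : IsIsotropic (S ⊔ T) := by
  rw [iso_iff] at *
  rw [perp_sup]
  refine sup_le (le_inf hS ?_) (le_inf h hT)
  have := perp_anti h
  rwa [perp_perp] at this

lemma iso_adj {n : ℕ} {S : Submodule F2 (PV n)} {v : PV n} (hS : IsIsotropic S)
    (hv : v ∈ perp S) : IsIsotropic (adj S v) := by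
  apply iso_sup hS
  · intro x hx y hy
    obtain ⟨a, rfl⟩ := Submodule.mem_span_singleton.1 hx
    obtain ⟨b, rfl⟩ := Submodule.mem_span_singleton.1 hy
    rw [← Bf_apply, map_smul, map_smul, LinearMap.smul_apply, Bf_apply, symp_self]
    simp
  · rwa [Submodule.span_singleton_le_iff_mem]

lemma exists_max {n : ℕ} (S : Submodule F2 (PV n)) (hS : IsIsotropic S) :
    ∃ x ∈ Lset n n, S ≤ x := by
  obtain ⟨k, hk⟩ : ∃ k, fr S + k = n := ⟨n - fr S, by have := iso_fr hS; omega⟩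
  induction k generalizing S with
  | zero => exact ⟨S, ⟨hS, hk⟩, le_rfl⟩
  | succ k ih =>
    have h1 := fr_perp S
    have h2 : ¬ perp S ≤ S := by
      intro h
      have := fr_mono h
      omega
    obtain ⟨v, hv, hv'⟩ := SetLike.not_le_iff_exists.1 h2
    obtain ⟨x, hx, hx'⟩ := ih (adj S v) (iso_adj hS hv) (by rw [fr_adj hv']; omega)
    exact ⟨x, hx, (le_adj S v).trans hx'⟩

lemma card_diff {n : ℕ} {S T : Submodule F2 (PV n)} (h : S ≤ T) :
    (univ.filter (fun v : PV n => v ∈ T ∧ v ∉ S)).card + 2 ^ fr S = 2 ^ fr T := by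
  have hc : ∀ U : Submodule F2 (PV n), (univ.filter (fun v : PV n => v ∈ U)).card = 2 ^ fr U := by
    intro U
    have := Module.natCard_eq_pow_finrank (K := F2) (V := U)
    rw [Nat.card_eq_fintype_card, Nat.card_eq_fintype_card, ZMod.card] at this
    rw [← this, Fintype.card_subtype]
  rw [← hc S, ← hc T, ← Finset.card_union_of_disjoint]
  · congr 1
    ext v
    simp only [mem_union, mem_filter, mem_univ, true_and]
    constructor
    · rintro (h1 | h1)
      · exact h1.1
      · exact h h1
    · intro h1
      by_cases h2 : v ∈ S
      · exact Or.inr h2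
      · exact Or.inl ⟨h1, h2⟩
  · rw [Finset.disjoint_left]
    intro v
    simp only [mem_filter, mem_univ, true_and]
    tauto

/-- Hyperplanes of `U` that contain `W`. -/
noncomputable def hyp {n : ℕ} (U W : Submodule F2 (PV n)) : Finset (Submodule F2 (PV n)) :=
  univ.filter (fun H => H ≤ U ∧ W ≤ H ∧ fr H + 1 = fr U)

lemma mem_hyp {n : ℕ} {U W H : Submodule F2 (PV n)} :
    H ∈ hyp U W ↔ H ≤ U ∧ W ≤ H ∧ fr H + 1 = fr U := by simp [hyp]

lemma perp_adj_perp {n : ℕ} (U : Submodule F2 (PV n)) (v : PV n) :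
    perp (adj (perp U) v) = U ⊓ perp (Submodule.span F2 {v}) := by
  rw [adj, perp_sup, perp_perp]

lemma card_hyp {n : ℕ} {U W : Submodule F2 (PV n)} (h : W ≤ U) :
    (hyp U W).card + 1 = 2 ^ (fr U - fr W) := by
  have key := Finset.card_eq_sum_card_fiberwise
    (s := univ.filter (fun v : PV n => v ∈ perp W ∧ v ∉ perp U))
    (t := hyp U W) (f := fun v => perp (adj (perp U) v)) (by
      intro v hv
      simp only [mem_coe, mem_filter, mem_univ, true_and] at hv
      rw [Finset.mem_coe, mem_hyp]
      refine ⟨?_, ?_, ?_⟩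
      · have := perp_anti (le_adj (perp U) v)
        rwa [perp_perp] at this
      · have := perp_anti (adj_le (perp_anti h) hv.1)
        rwa [perp_perp] at this
      · show fr (perp (adj (perp U) v)) + 1 = fr U
        have h1 := fr_adj hv.2
        have h2 := fr_perp (adj (perp U) v)
        have h3 := fr_perp U
        omega)
  have hfib : ∀ H ∈ hyp U W, (((univ.filter (fun v : PV n => v ∈ perp W ∧ v ∉ perp U))).filter
      (fun v => perp (adj (perp U) v) = H)).card = 2 ^ fr (perp U) := by
    intro H hH
    rw [mem_hyp] at hH
    obtain ⟨h1, h2, h3⟩ := hH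
    have e := card_diff (perp_anti h1)
    have f1 := fr_perp H
    have f2 := fr_perp U
    have f3 : fr (perp H) = fr (perp U) + 1 := by omega
    rw [f3, pow_succ] at e
    have : ((univ.filter (fun v : PV n => v ∈ perp W ∧ v ∉ perp U))).filter
      (fun v => perp (adj (perp U) v) = H) = univ.filter (fun v : PV n => v ∈ perp H ∧ v ∉ perp U) := by
      ext v
      simp only [mem_filter, mem_univ, true_and]
      constructor
      · rintro ⟨⟨a, b⟩, rfl⟩
        rw [perp_perp]
        exact ⟨mem_adj _ _, b⟩
      · rintro ⟨a, b⟩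
        refine ⟨⟨perp_anti h2 a, b⟩, ?_⟩
        have : adj (perp U) v = perp H := by
          apply eq_of_fr (adj_le (perp_anti h1) a)
          rw [fr_adj b]; omega
        rw [this, perp_perp]
    rw [this]; omega
  rw [Finset.sum_congr rfl hfib, Finset.sum_const, smul_eq_mul] at key
  have e := card_diff (perp_anti h)
  rw [key] at e
  have f1 := fr_perp W
  have f2 := fr_perp U
  have f3 := fr_mono h
  have : fr (perp W) = (fr U - fr W) + fr (perp U) := by omega
  rw [this, pow_add] at e
  have hp : 0 < 2 ^ fr (perp U) := by positivity
  apply Nat.eq_of_mul_eq_mul_right hp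
  rw [← e]; ring

/-- Maximal isotropic subspaces containing `H`. -/
noncomputable def mx {n : ℕ} (H : Submodule F2 (PV n)) : Finset (Submodule F2 (PV n)) :=
  univ.filter (fun z => z ∈ Lset n n ∧ H ≤ z)

lemma mem_mx {n : ℕ} {H z : Submodule F2 (PV n)} : z ∈ mx H ↔ z ∈ Lset n n ∧ H ≤ z := by
  simp [mx]

lemma adj_eq {n : ℕ} {H z : Submodule F2 (PV n)} (hH : fr H + 1 = n) (hz : z ∈ Lset n n)
    (h : H ≤ z) {v : PV n} (hv : v ∈ z) (hv' : v ∉ H) : adj H v = z := by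
  apply eq_of_fr (adj_le h hv)
  have : fr z = n := hz.2
  rw [fr_adj hv', this, hH]

lemma card_mx {n : ℕ} {H : Submodule F2 (PV n)} (hH : IsIsotropic H) (hn : fr H + 1 = n) :
    (mx H).card = 3 := by
  have key := Finset.card_eq_sum_card_fiberwise
    (s := univ.filter (fun v : PV n => v ∈ perp H ∧ v ∉ H))
    (t := mx H) (f := fun v => adj H v) (by
      intro v hv
      simp only [mem_coe, mem_filter, mem_univ, true_and] at hv
      rw [Finset.mem_coe, mem_mx]
      exact ⟨⟨iso_adj hH hv.1, by show Module.finrank F2 (adj H v) = n; have := fr_adj hv.2; unfold fr at *; omega⟩, le_adj _ _⟩)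
  have hfib : ∀ z ∈ mx H, ((univ.filter (fun v : PV n => v ∈ perp H ∧ v ∉ H)).filter
      (fun v => adj H v = z)).card = 2 ^ fr H := by
    intro z hz
    rw [mem_mx] at hz
    have hzn : fr z = fr H + 1 := by have : fr z = n := hz.1.2; omega
    have e := card_diff hz.2
    rw [hzn, pow_succ] at e
    have : (univ.filter (fun v : PV n => v ∈ perp H ∧ v ∉ H)).filter
      (fun v => adj H v = z) = univ.filter (fun v : PV n => v ∈ z ∧ v ∉ H) := by
      ext v
      simp only [mem_filter, mem_univ, true_and]
      constructor
      · rintro ⟨⟨a, b⟩, rfl⟩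
        exact ⟨mem_adj _ _, b⟩
      · rintro ⟨a, b⟩
        refine ⟨⟨?_, b⟩, adj_eq hn hz.1 hz.2 a b⟩
        exact perp_anti hz.2 (iso_iff.1 hz.1.1 a)
    rw [this]; omega
  rw [Finset.sum_congr rfl hfib, Finset.sum_const, smul_eq_mul] at key
  have e := card_diff (iso_iff.1 hH)
  rw [key] at e
  have f1 := fr_perp H
  have : fr (perp H) = 2 + fr H := by omega
  rw [this, pow_add] at e
  have hp : 0 < 2 ^ fr H := by positivity
  apply Nat.eq_of_mul_eq_mul_right hp
  omega

/-- near-polygon property -/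
lemma near {n : ℕ} {H x : Submodule F2 (PV n)} (hH : IsIsotropic H) (hn : fr H + 1 = n)
    (hx : x ∈ Lset n n) :
    ∃ z₀ ∈ mx H, fr (x ⊓ z₀) = fr (x ⊓ H) + 1 ∧
      ∀ z ∈ mx H, z ≠ z₀ → fr (x ⊓ z) = fr (x ⊓ H) := by
  have e1 : x ⊓ perp H = perp (x ⊔ H) := by rw [perp_sup, perp_max hx]
  have hxn : fr x = n := hx.2
  have e2 : fr (x ⊓ perp H) = fr (x ⊓ H) + 1 := by
    rw [e1]
    have a := fr_perp (x ⊔ H)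
    have b := sup_inf_fr x H
    omega
  have hle : x ⊓ H ≤ x ⊓ perp H := inf_le_inf_left _ (iso_iff.1 hH)
  have h2 : ¬ x ⊓ perp H ≤ x ⊓ H := by
    intro h
    have := fr_mono h
    omega
  obtain ⟨p, hp, hp'⟩ := SetLike.not_le_iff_exists.1 h2
  have hpH : p ∉ H := fun h => hp' ⟨hp.1, h⟩
  have hz : adj H p ∈ mx H := by
    rw [mem_mx]
    exact ⟨⟨iso_adj hH hp.2, by have := fr_adj hpH; unfold fr at *; omega⟩, le_adj _ _⟩
  have e3 : adj (x ⊓ H) p = x ⊓ perp H := by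
    apply eq_of_fr (adj_le hle hp)
    rw [fr_adj hp', e2]
  have hup : ∀ z ∈ mx H, x ⊓ z ≤ x ⊓ perp H := by
    intro z hz
    rw [mem_mx] at hz
    exact inf_le_inf_left _ ((iso_iff.1 hz.1.1).trans (perp_anti hz.2))
  have hlow : x ⊓ perp H ≤ x ⊓ adj H p := by
    rw [← e3]
    exact adj_le (inf_le_inf_left _ (le_adj _ _)) ⟨hp.1, mem_adj _ _⟩
  refine ⟨adj H p, hz, ?_, ?_⟩
  · rw [← e2]
    exact le_antisymm (fr_mono (hup _ hz)) (fr_mono hlow)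
  · intro z hz' hne
    rw [mem_mx] at hz'
    have : x ⊓ z = x ⊓ H := by
      apply le_antisymm _ (inf_le_inf_left _ hz'.2)
      intro v hv
      refine ⟨hv.1, ?_⟩
      by_contra hvH
      apply hne
      rw [← adj_eq hn hz'.1 hz'.2 hv.2 hvH]
      refine adj_eq hn (mem_mx.1 hz).1 (le_adj _ _) ?_ hvH
      exact (hlow (hup z (mem_mx.2 hz') hv)).2
    rw [this]

lemma sum_near {n : ℕ} {H x : Submodule F2 (PV n)} (hH : IsIsotropic H) (hn : fr H + 1 = n)
    (hx : x ∈ Lset n n) (α : ℕ → ℝ) :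
    ∑ z ∈ mx H, α (fr (x ⊓ z)) = α (fr (x ⊓ H) + 1) + 2 * α (fr (x ⊓ H)) := by
  obtain ⟨z₀, h0, h1, h2⟩ := near hH hn hx
  have h3 := card_mx hH hn
  have hc : ((mx H).erase z₀).card = 2 := by rw [Finset.card_erase_of_mem h0, h3]
  rw [← Finset.add_sum_erase _ _ h0, h1]
  congr 1
  rw [Finset.sum_congr rfl (g := fun _ => α (fr (x ⊓ H)))]
  · rw [Finset.sum_const, hc]; simp
  · intro z hz
    rw [Finset.mem_erase] at hz
    rw [h2 z hz.2 hz.1]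

/-- dimension of intersection with a hyperplane -/
lemma fr_inf_hyp {n : ℕ} {x y w H : Submodule F2 (PV n)} (hH : H ∈ hyp x w) :
    fr (y ⊓ H) = if x ⊓ y ≤ H then fr (x ⊓ y) else fr (x ⊓ y) - 1 := by
  obtain ⟨h1, _, h3⟩ := mem_hyp.1 hH
  have e : y ⊓ H = (x ⊓ y) ⊓ H := by
    apply le_antisymm
    · exact le_inf (le_inf (inf_le_right.trans h1) inf_le_left) inf_le_right
    · exact inf_le_inf_right _ inf_le_right
  rw [e]
  split_ifs with h
  · rw [inf_eq_left.2 h]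
  · obtain ⟨v, hv, hv'⟩ := SetLike.not_le_iff_exists.1 h
    have a1 := fr_lt (S := H) (T := (x ⊓ y) ⊔ H) le_sup_right (Submodule.mem_sup_left hv) hv'
    have a2 := fr_mono (sup_le (inf_le_left : x ⊓ y ≤ x) h1)
    have a3 := sup_inf_fr (x ⊓ y) H
    omega

lemma hyp_filter {n : ℕ} {x w T : Submodule F2 (PV n)} (hw : w ≤ T) :
    (hyp x w).filter (fun H => T ≤ H) = hyp x T := by
  ext H
  simp only [mem_filter, mem_hyp]
  constructor
  · rintro ⟨⟨a, b, c⟩, d⟩; exact ⟨a, d, c⟩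
  · rintro ⟨a, d, c⟩; exact ⟨⟨a, hw.trans d, c⟩, d⟩

lemma card_hyp_real {n : ℕ} {U W : Submodule F2 (PV n)} (h : W ≤ U) :
    ((hyp U W).card : ℝ) = 2 ^ (fr U - fr W) - 1 := by
  have := card_hyp h
  have h2 : ((hyp U W).card : ℝ) + 1 = 2 ^ (fr U - fr W) := by exact_mod_cast this
  linarith

lemma sum_hyp {n : ℕ} {x w T : Submodule F2 (PV n)} (hw : w ≤ T) (hT : T ≤ x) (a b : ℝ) :
    ∑ H ∈ hyp x w, (if T ≤ H then a else b) =
      (2 ^ (fr x - fr T) - 1) * a + (2 ^ (fr x - fr w) - 2 ^ (fr x - fr T)) * b := by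
  have e1 := card_hyp_real hT
  have e2 := card_hyp_real (hw.trans hT)
  have e3 : ∀ H, (if T ≤ H then a else b) = b + (if T ≤ H then (a - b) else 0) := by
    intro H; split_ifs <;> ring
  simp_rw [e3]
  rw [Finset.sum_add_distrib, ← Finset.sum_filter, hyp_filter hw, Finset.sum_const,
    Finset.sum_const, nsmul_eq_mul, nsmul_eq_mul, e1, e2]
  ring

lemma iso_hyp {n : ℕ} {x w H : Submodule F2 (PV n)} (hx : x ∈ Lset n n) (hH : H ∈ hyp x w) :
    IsIsotropic H ∧ fr H + 1 = n := by
  obtain ⟨h1, _, h3⟩ := mem_hyp.1 hH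
  refine ⟨iso_mono h1 hx.1, ?_⟩
  rw [h3]; exact hx.2

/-- `M = ∑_H 1_H 1_Hᵀ` -/
noncomputable def Mm (n : ℕ) (w : Submodule F2 (PV n)) : Matrix (GVtx n w) (GVtx n w) ℝ :=
  fun x z => (((hyp x.1 w).filter (fun H => H ≤ z.1)).card : ℝ)

lemma Mm_symm {n : ℕ} {w : Submodule F2 (PV n)} : (Mm n w).transpose = Mm n w := by
  ext x z
  simp only [Matrix.transpose_apply, Mm]
  congr 2
  ext H
  simp only [mem_filter, mem_hyp]
  have h1 : fr x.1 = n := x.2.1.2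
  have h2 : fr z.1 = n := z.2.1.2
  rw [h1, h2]
  tauto

lemma sum_vtx {n : ℕ} {w H : Submodule F2 (PV n)} (hw : w ≤ H) (g : Submodule F2 (PV n) → ℝ) :
    ∑ z : GVtx n w, (if H ≤ z.1 then g z.1 else 0) = ∑ z ∈ mx H, g z := by
  rw [← Finset.sum_filter]
  apply Finset.sum_bij (fun z _ => z.1)
  · intro z hz
    rw [mem_mx]
    exact ⟨z.2.1, (mem_filter.1 hz).2⟩
  · intro a _ b _ h; exact Subtype.ext h
  · intro b hb
    rw [mem_mx] at hb
    exact ⟨⟨b, hb.1, hw.trans hb.2⟩, by simpa using hb.2, rfl⟩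
  · intros; rfl

lemma Mm_sum {n : ℕ} {w : Submodule F2 (PV n)} (x : GVtx n w) (g : Submodule F2 (PV n) → ℝ) :
    ∑ z, Mm n w x z * g z.1 = ∑ H ∈ hyp x.1 w, ∑ z ∈ mx H, g z := by
  have : ∀ H ∈ hyp x.1 w, ∑ z ∈ mx H, g z =
      ∑ z : GVtx n w, (if H ≤ z.1 then g z.1 else 0) := by
    intro H hH
    rw [sum_vtx (mem_hyp.1 hH).2.1]
  rw [Finset.sum_congr rfl this, Finset.sum_comm]
  apply Finset.sum_congr rfl
  intro z _
  rw [← Finset.sum_filter, Finset.sum_const, nsmul_eq_mul, Mm]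

/-- functions of the dimension of the intersection -/
noncomputable def Km (n : ℕ) (w : Submodule F2 (PV n)) (α : ℕ → ℝ) :
    Matrix (GVtx n w) (GVtx n w) ℝ := fun x y => α (fr (x.1 ⊓ y.1))

lemma Km_symm {n : ℕ} {w : Submodule F2 (PV n)} (α : ℕ → ℝ) :
    (Km n w α).transpose = Km n w α := by
  ext x z
  simp only [Matrix.transpose_apply, Km]
  rw [inf_comm]

lemma Mm_Km {n : ℕ} {w : Submodule F2 (PV n)} (hw : w ∈ Lset n 1) (α : ℕ → ℝ) :
    Mm n w * Km n w α = Km n w (fun D =>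
      (2 ^ (n - D) - 1) * (α (D + 1) + 2 * α D) +
      (2 ^ (n - 1) - 2 ^ (n - D)) * (α (D - 1 + 1) + 2 * α (D - 1))) := by
  ext x y
  have hx : fr x.1 = n := x.2.1.2
  have hw1 : fr w = 1 := hw.2
  rw [Matrix.mul_apply]
  simp only [Km]
  rw [Mm_sum x (fun z => α (fr (z ⊓ y.1)))]
  have e : ∀ H ∈ hyp x.1 w, ∑ z ∈ mx H, α (fr (z ⊓ y.1)) =
      if x.1 ⊓ y.1 ≤ H then (α (fr (x.1 ⊓ y.1) + 1) + 2 * α (fr (x.1 ⊓ y.1))) else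
      (α (fr (x.1 ⊓ y.1) - 1 + 1) + 2 * α (fr (x.1 ⊓ y.1) - 1)) := by
    intro H hH
    obtain ⟨i1, i2⟩ := iso_hyp x.2.1 hH
    have := sum_near i1 i2 y.2.1 α
    simp_rw [inf_comm y.1] at this
    rw [this, inf_comm H, fr_inf_hyp hH]
    split_ifs <;> rfl
  rw [Finset.sum_congr rfl e, sum_hyp (le_inf x.2.2 y.2.2) inf_le_left, hx, hw1]

/-- indicator of the maximals that contain `U` -/
noncomputable def fU {n : ℕ} (w U : Submodule F2 (PV n)) : GVtx n w → ℝ :=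
  fun z => if U ≤ z.1 then 1 else 0

/-- eigenvalues of `M` -/
noncomputable def lam (n D : ℕ) : ℝ := 2 ^ (n + 1 - D) + 2 ^ (n - 1) - 2 ^ (D - 1) - 2

lemma Mm_fU {n : ℕ} {w : Submodule F2 (PV n)} (hw : w ∈ Lset n 1) {U : Submodule F2 (PV n)}
    (hU : IsIsotropic U) (hwU : w ≤ U) (x : GVtx n w) :
    (Mm n w).mulVec (fU w U) x = lam n (fr U) * fU w U x + ∑ W ∈ hyp U w, fU w W x := by
  have hx : fr x.1 = n := x.2.1.2
  have hw1 : fr w = 1 := hw.2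
  have hUn := iso_fr hU
  have hU1 : 1 ≤ fr U := by rw [← hw1]; exact fr_mono hwU
  have e0 : (Mm n w).mulVec (fU w U) x =
      ∑ H ∈ hyp x.1 w, ∑ z ∈ mx H, (if U ≤ z then (1:ℝ) else 0) :=
    Mm_sum x (fun z => if U ≤ z then (1:ℝ) else 0)
  rw [e0]
  by_cases hUx : U ≤ x.1
  · have e1 : ∀ H ∈ hyp x.1 w, ∑ z ∈ mx H, (if U ≤ z then (1:ℝ) else 0) =
        if U ≤ H then 3 else 1 := by
      intro H hH
      obtain ⟨i1, i2⟩ := iso_hyp x.2.1 hH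
      obtain ⟨j1, j2, j3⟩ := mem_hyp.1 hH
      split_ifs with h
      · rw [Finset.sum_congr rfl (g := fun _ => (1:ℝ))]
        · rw [Finset.sum_const, card_mx i1 i2]; norm_num
        · intro z hz
          rw [if_pos (h.trans (mem_mx.1 hz).2)]
      · obtain ⟨v, hv, hv'⟩ := SetLike.not_le_iff_exists.1 h
        rw [Finset.sum_eq_single x.1]
        · rw [if_pos hUx]
        · intro z hz hne
          rw [if_neg]
          intro hUz
          apply hne
          obtain ⟨k1, k2⟩ := mem_mx.1 hz
          rw [← adj_eq i2 k1 k2 (hUz hv) hv', adj_eq i2 x.2.1 j1 (hUx hv) hv']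
        · intro hne
          exact absurd (mem_mx.2 ⟨x.2.1, j1⟩) hne
    have e2 : ∀ W ∈ hyp U w, fU w W x = 1 := by
      intro W hW
      rw [fU, if_pos ((mem_hyp.1 hW).1.trans hUx)]
    rw [Finset.sum_congr rfl e1, sum_hyp hwU hUx, Finset.sum_congr rfl e2, Finset.sum_const,
      nsmul_eq_mul, card_hyp_real hwU, fU, if_pos hUx, lam, hx, hw1]
    have : n + 1 - fr U = (n - fr U) + 1 := by omega
    rw [this, pow_succ]
    ring
  · have hfx : fU w U x = 0 := by rw [fU, if_neg hUx]
    rw [hfx, mul_zero, zero_add]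
    have hlt : fr (U ⊓ x.1) < fr U := by
      obtain ⟨v, hv, hv'⟩ := SetLike.not_le_iff_exists.1 hUx
      exact fr_lt inf_le_left hv (fun h => hv' h.2)
    by_cases hD : fr (U ⊓ x.1) + 1 = fr U
    · -- both sides equal one
      have r1 : ∑ W ∈ hyp U w, fU w W x = 1 := by
        rw [Finset.sum_eq_single (U ⊓ x.1)]
        · rw [fU, if_pos inf_le_right]
        · intro W hW hne
          obtain ⟨j1, j2, j3⟩ := mem_hyp.1 hW
          rw [fU, if_neg]
          intro hWx
          apply hne
          exact eq_of_fr (le_inf j1 hWx) (by omega)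
        · intro h
          exact absurd (mem_hyp.2 ⟨inf_le_left, le_inf hwU x.2.2, hD⟩) h
      rw [r1]
      have pe : x.1 ⊓ perp U = perp (x.1 ⊔ U) := by rw [perp_sup, perp_max x.2.1]
      have f0 : fr (x.1 ⊓ perp U) + 1 = n := by
        rw [pe]
        have a := fr_perp (x.1 ⊔ U)
        have b := sup_inf_fr x.1 U
        rw [inf_comm] at b
        omega
      have hH0 : x.1 ⊓ perp U ∈ hyp x.1 w :=
        mem_hyp.2 ⟨inf_le_left, le_inf x.2.2 (hwU.trans (iso_iff.1 hU)), by rw [f0, hx]⟩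
      have fz : fr (U ⊔ x.1 ⊓ perp U) = n := by
        have b := sup_inf_fr U (x.1 ⊓ perp U)
        have c : U ⊓ (x.1 ⊓ perp U) = U ⊓ x.1 := by
          rw [← inf_assoc]
          exact inf_eq_left.2 (inf_le_left.trans (iso_iff.1 hU))
        rw [c] at b
        omega
      have hz0 : U ⊔ x.1 ⊓ perp U ∈ Lset n n :=
        ⟨iso_sup hU (iso_mono inf_le_left x.2.1.1) inf_le_right, fz⟩
      rw [Finset.sum_eq_single (x.1 ⊓ perp U)]
      · rw [Finset.sum_eq_single (U ⊔ x.1 ⊓ perp U)]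
        · rw [if_pos le_sup_left]
        · intro z hz hne
          rw [if_neg]
          intro hUz
          obtain ⟨k1, k2⟩ := mem_mx.1 hz
          apply hne
          have hzn : fr z = n := k1.2
          exact (eq_of_fr (sup_le hUz k2) (by omega)).symm
        · intro h
          exact absurd (mem_mx.2 ⟨hz0, le_sup_right⟩) h
      · intro H hH hne
        apply Finset.sum_eq_zero
        intro z hz
        rw [if_neg]
        intro hUz
        obtain ⟨k1, k2⟩ := mem_mx.1 hz
        obtain ⟨j1, j2, j3⟩ := mem_hyp.1 hH
        apply hne
        apply eq_of_fr (le_inf j1 (k2.trans ((iso_iff.1 k1.1).trans (perp_anti hUz))))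
        omega
      · intro h; exact absurd hH0 h
    · rw [Finset.sum_eq_zero, Finset.sum_eq_zero]
      · intro W hW
        obtain ⟨j1, j2, j3⟩ := mem_hyp.1 hW
        rw [fU, if_neg]
        intro hWx
        have := fr_mono (le_inf j1 hWx)
        omega
      · intro H hH
        apply Finset.sum_eq_zero
        intro z hz
        rw [if_neg]
        intro hUz
        obtain ⟨k1, k2⟩ := mem_mx.1 hz
        obtain ⟨j1, j2, j3⟩ := mem_hyp.1 hH
        have hzn : fr z = n := k1.2
        have a := sup_inf_fr U H
        have b := fr_mono (sup_le hUz k2)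
        have c := fr_mono (inf_le_inf_left U j1)
        omega

/-- partial products of `M - λ_D` -/
noncomputable def Pm (n : ℕ) (w : Submodule F2 (PV n)) : ℕ → Matrix (GVtx n w) (GVtx n w) ℝ
  | 0 => 1
  | k + 1 => (Mm n w - lam n (k + 1) • (1 : Matrix (GVtx n w) (GVtx n w) ℝ)) * Pm n w k

lemma fU_Pm {n : ℕ} {w : Submodule F2 (PV n)} (hw : w ∈ Lset n 1) (k : ℕ) :
    ∀ U : Submodule F2 (PV n), IsIsotropic U → w ≤ U → fr U ≤ k →
      Matrix.vecMul (fU w U) (Pm n w k) = 0 := by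
  induction k with
  | zero =>
    intro U _ hwU h
    have := fr_mono hwU
    have hw1 : fr w = 1 := hw.2
    omega
  | succ k ih =>
    intro U hU hwU h
    have e1 : Matrix.vecMul (fU w U) (Mm n w) =
        lam n (fr U) • fU w U + ∑ W ∈ hyp U w, fU w W := by
      rw [← Mm_symm, Matrix.vecMul_transpose]
      ext x
      rw [Mm_fU hw hU hwU x]
      simp
    rw [Pm, ← Matrix.vecMul_vecMul, Matrix.vecMul_sub, e1, Matrix.vecMul_smul, Matrix.vecMul_one,
      Matrix.sub_vecMul, Matrix.add_vecMul, Matrix.smul_vecMul, Matrix.smul_vecMul,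
      Matrix.sum_vecMul, Finset.sum_eq_zero]
    · rcases Nat.lt_or_ge k (fr U) with h1 | h1
      · have : fr U = k + 1 := by omega
        rw [this]; simp
      · rw [ih U hU hwU h1]; simp
    · intro W hW
      obtain ⟨j1, j2, j3⟩ := mem_hyp.1 hW
      exact ih W (iso_mono j1 hU) j2 (by omega)

lemma Pm_n {n : ℕ} {w : Submodule F2 (PV n)} (hw : w ∈ Lset n 1) : Pm n w n = 0 := by
  ext x y
  have h := congrFun (fU_Pm hw n x.1 x.2.1.1 x.2.2 (le_of_eq x.2.1.2)) y
  have e : fU w x.1 = Pi.single x 1 := by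
    ext z
    rw [fU, Pi.single_apply]
    congr 1
    apply propext
    constructor
    · intro h
      apply Subtype.ext
      have a : fr x.1 = n := x.2.1.2
      have b : fr z.1 = n := z.2.1.2
      exact (eq_of_fr h (by omega)).symm
    · rintro rfl; exact le_rfl
  rw [e, Matrix.single_one_vecMul] at h
  exact h

lemma Pm_form {n : ℕ} {w : Submodule F2 (PV n)} (hw : w ∈ Lset n 1) (k : ℕ) (hk : k < n) :
    ∃ α : ℕ → ℝ, Pm n w k = Km n w α ∧ (∀ d, d < n - k → α d = 0) ∧ α (n - k) ≠ 0 := by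
  induction k with
  | zero =>
    refine ⟨fun d => if d = n then 1 else 0, ?_, ?_, by simp⟩
    · ext x y
      rw [Pm, Km, Matrix.one_apply]
      congr 1
      apply propext
      have a : fr x.1 = n := x.2.1.2
      have b : fr y.1 = n := y.2.1.2
      constructor
      · rintro rfl; simpa using a
      · intro h
        apply Subtype.ext
        have e1 := eq_of_fr (inf_le_left : x.1 ⊓ y.1 ≤ x.1) (by omega)
        have e2 := eq_of_fr (inf_le_right : x.1 ⊓ y.1 ≤ y.1) (by omega)
        exact e1.symm.trans e2
    · intro d hd
      exact if_neg (by omega)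
  | succ k ih =>
    obtain ⟨α, h1, h2, h3⟩ := ih (by omega)
    refine ⟨fun D => ((2 ^ (n - D) - 1) * (α (D + 1) + 2 * α D) +
      (2 ^ (n - 1) - 2 ^ (n - D)) * (α (D - 1 + 1) + 2 * α (D - 1))) - lam n (k + 1) * α D,
      ?_, ?_, ?_⟩
    · rw [Pm, h1, Matrix.sub_mul, Mm_Km hw]
      ext x y
      simp [Km]
    · intro d hd
      have a1 : α (d + 1) = 0 := h2 _ (by omega)
      have a2 : α d = 0 := h2 _ (by omega)
      have a3 : α (d - 1) = 0 := h2 _ (by omega)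
      have a4 : α (d - 1 + 1) = 0 := h2 _ (by omega)
      simp only [a1, a2, a3, a4]; ring
    · have a1 : n - (k + 1) + 1 = n - k := by omega
      have a2 : α (n - (k + 1)) = 0 := h2 _ (by omega)
      have a3 : α (n - (k + 1) - 1) = 0 := h2 _ (by omega)
      have a4 : α (n - (k + 1) - 1 + 1) = 0 := h2 _ (by omega)
      have a5 : n - (n - (k + 1)) = k + 1 := by omega
      simp only [a1, a2, a3, a4, a5]
      have p : (1:ℝ) < 2 ^ (k + 1) := one_lt_pow₀ (by norm_num) (by omega)
      have q : (2:ℝ) ^ (k + 1) - 1 ≠ 0 := by linarith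
      have := mul_ne_zero q h3
      intro h
      apply this
      linarith

lemma exists_opp {n : ℕ} {w : Submodule F2 (PV n)} (hw : w ∈ Lset n 1) (hn : 1 ≤ n) :
    ∃ x y : GVtx n w, fr (x.1 ⊓ y.1) = 1 := by
  obtain ⟨x, hx, hwx⟩ := exists_max w hw.1
  have hw1 : fr w = 1 := hw.2
  have key : ∀ k, k < n → ∃ y : GVtx n w, fr (x ⊓ y.1) = n - k := by
    intro k
    induction k with
    | zero =>
      intro _
      refine ⟨⟨x, hx, hwx⟩, ?_⟩
      simpa using hx.2
    | succ k ih =>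
      intro hk
      obtain ⟨y, hy⟩ := ih (by omega)
      have hyn : fr y.1 = n := y.2.1.2
      have c1 := card_hyp y.2.2
      have c2 := card_hyp (inf_le_left : y.1 ⊓ x ≤ y.1)
      have hlt : 2 ^ (fr y.1 - fr (y.1 ⊓ x)) < 2 ^ (fr y.1 - fr w) :=
        Nat.pow_lt_pow_right (by norm_num) (by rw [inf_comm]; omega)
      have : ∃ H ∈ hyp y.1 w, ¬ (y.1 ⊓ x ≤ H) := by
        by_contra hcon
        push Not at hcon
        have : hyp y.1 w ⊆ hyp y.1 (y.1 ⊓ x) := by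
          intro H hH
          obtain ⟨j1, j2, j3⟩ := mem_hyp.1 hH
          exact mem_hyp.2 ⟨j1, hcon H hH, j3⟩
        have := Finset.card_le_card this
        omega
      obtain ⟨H, hH, hHx⟩ := this
      have e := fr_inf_hyp (y := x) hH
      rw [if_neg hHx, inf_comm y.1, hy] at e
      obtain ⟨i1, i2⟩ := iso_hyp y.2.1 hH
      obtain ⟨z₀, h0, _, h2⟩ := near i1 i2 hx
      have h3 := card_mx i1 i2
      obtain ⟨z, hz⟩ : ((mx H).erase z₀).Nonempty := by
        rw [← Finset.card_pos, Finset.card_erase_of_mem h0, h3]; norm_num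
      rw [Finset.mem_erase] at hz
      obtain ⟨k1, k2⟩ := mem_mx.1 hz.2
      refine ⟨⟨z, k1, (mem_hyp.1 hH).2.1.trans k2⟩, ?_⟩
      rw [h2 z hz.2 hz.1, e]
      omega
  obtain ⟨y, hy⟩ := key (n - 1) (by omega)
  exact ⟨⟨x, hx, hwx⟩, y, by rw [hy]; omega⟩

lemma exists_ker {n : ℕ} {w : Submodule F2 (PV n)} (hw : w ∈ Lset n 1) (hn : 1 ≤ n) :
    ∃ v : GVtx n w → ℝ, v ≠ 0 ∧ (Mm n w).mulVec v = lam n n • v := by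
  obtain ⟨x, y, hxy⟩ := exists_opp hw hn
  obtain ⟨α, h1, _, h3⟩ := Pm_form hw (n - 1) (by omega)
  have hnn : n - (n - 1) = 1 := by omega
  rw [hnn] at h3
  refine ⟨(Pm n w (n - 1)).mulVec (Pi.single y 1), ?_, ?_⟩
  · intro h
    have := congrFun h x
    rw [Matrix.mulVec_single_one, h1] at this
    simp only [Matrix.col_apply, Km, Pi.zero_apply, hxy] at this
    exact h3 this
  · have h := Pm_n hw
    obtain ⟨k, rfl⟩ : ∃ k, n = k + 1 := ⟨n - 1, by omega⟩
    rw [Pm] at h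
    have h' := congrArg (fun A => Matrix.mulVec A (Pi.single y 1)) h
    simp only [← Matrix.mulVec_mulVec, Matrix.sub_mulVec, Matrix.smul_mulVec, Matrix.one_mulVec,
      Matrix.zero_mulVec] at h'
    exact sub_eq_zero.1 h'

lemma adjG_eq {n : ℕ} {w : Submodule F2 (PV n)} (d : ℕ) :
    adjG n w d = Km n w (fun D => if D = d then 1 else 0) := by
  ext x y
  simp only [adjG, adjMat, Km, fr]
  congr

lemma adjG_symm {n : ℕ} {w : Submodule F2 (PV n)} (d : ℕ) :
    (adjG n w d).transpose = adjG n w d := by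
  rw [adjG_eq, Km_symm]

lemma adjG_n {n : ℕ} {w : Submodule F2 (PV n)} : adjG n w n = 1 := by
  ext x y
  rw [adjG_eq, Km, Matrix.one_apply]
  congr 1
  apply propext
  have a : fr x.1 = n := x.2.1.2
  have b : fr y.1 = n := y.2.1.2
  constructor
  · intro h
    apply Subtype.ext
    have e1 := eq_of_fr (inf_le_left : x.1 ⊓ y.1 ≤ x.1) (by omega)
    have e2 := eq_of_fr (inf_le_right : x.1 ⊓ y.1 ≤ y.1) (by omega)
    exact e1.symm.trans e2
  · rintro rfl; simpa using a

lemma Mm_adjG {n : ℕ} {w : Submodule F2 (PV n)} (hw : w ∈ Lset n 1) (i : ℕ) (hi : i < n) :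
    Mm n w * adjG n w (n - i) =
      ((2:ℝ) ^ (i + 1) - 1) • adjG n w (n - (i + 1)) +
      ((2:ℝ) ^ (n - 1) + 2 ^ i - 2) • adjG n w (n - i) +
      ((2:ℝ) ^ n - 2 ^ i) • adjG n w (n - i + 1) := by
  rw [adjG_eq, Mm_Km hw]
  ext x y
  have hD : 1 ≤ fr (x.1 ⊓ y.1) := by
    have : fr w = 1 := hw.2
    rw [← this]; exact fr_mono (le_inf x.2.2 y.2.2)
  have hDn : fr (x.1 ⊓ y.1) ≤ n := by
    have a : fr x.1 = n := x.2.1.2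
    have := fr_mono (inf_le_left : x.1 ⊓ y.1 ≤ x.1)
    omega
  simp only [adjG_eq, Matrix.add_apply, Matrix.smul_apply, Km, smul_eq_mul]
  generalize fr (x.1 ⊓ y.1) = D at *
  have hD1 : D - 1 + 1 = D := by omega
  rw [hD1]
  by_cases c1 : D + 1 = n - i
  · have e1 : D = n - (i + 1) := by omega
    have e2 : D ≠ n - i := by omega
    have e3 : D - 1 ≠ n - i := by omega
    have e4 : D ≠ n - i + 1 := by omega
    have e5 : n - D = i + 1 := by omega
    rw [if_pos c1, if_neg e2, if_neg e3, if_pos e1, if_neg e4, e5]; ring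
  by_cases c2 : D = n - i
  · have e1 : D ≠ n - (i + 1) := by omega
    have e3 : D - 1 ≠ n - i := by omega
    have e4 : D ≠ n - i + 1 := by omega
    have e5 : n - D = i := by omega
    rw [if_neg c1, if_pos c2, if_neg e3, if_neg e1, if_neg e4, e5]; ring
  by_cases c3 : D = n - i + 1
  · have e1 : D ≠ n - (i + 1) := by omega
    have e3 : D - 1 = n - i := by omega
    obtain ⟨k, rfl⟩ : ∃ k, n = k + 1 := ⟨n - 1, by omega⟩
    obtain ⟨l, rfl⟩ : ∃ l, i = l + 1 := ⟨i - 1, by omega⟩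
    have e5 : k + 1 - D = l := by omega
    rw [if_neg c1, if_neg c2, if_pos e3, if_neg e1, if_pos c3, e5]
    simp only [Nat.add_sub_cancel]
    ring
  · have e1 : D ≠ n - (i + 1) := by omega
    have e3 : D - 1 ≠ n - i := by omega
    rw [if_neg c1, if_neg c2, if_neg e3, if_neg e1, if_neg c3]; ring

lemma adjG_comm {n : ℕ} {w : Submodule F2 (PV n)} (hw : w ∈ Lset n 1) (d : ℕ) :
    adjG n w d * Mm n w = Mm n w * adjG n w d := by
  have h : (Mm n w * adjG n w d).transpose = Mm n w * adjG n w d := by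
    rw [adjG_eq, Mm_Km hw, Km_symm]
  rw [Matrix.transpose_mul, adjG_symm, Mm_symm] at h
  exact h

lemma adjG_Pm {n : ℕ} {w : Submodule F2 (PV n)} (hw : w ∈ Lset n 1) (d k : ℕ) :
    adjG n w d * Pm n w k = Pm n w k * adjG n w d := by
  induction k with
  | zero => simp [Pm]
  | succ k ih =>
    have e : adjG n w d * (Mm n w - lam n (k + 1) • 1) = (Mm n w - lam n (k + 1) • 1) * adjG n w d := by
      rw [Matrix.mul_sub, Matrix.sub_mul, adjG_comm hw]
      simp
    rw [Pm, ← Matrix.mul_assoc, e, Matrix.mul_assoc, ih, Matrix.mul_assoc]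

/-- valencies -/
noncomputable def kk (n : ℕ) : ℕ → ℝ
  | 0 => 1
  | i + 1 => kk n i * (2 ^ n - 2 ^ (i + 1)) / (2 ^ (i + 1) - 1)

lemma pow_gt_one (i : ℕ) : (1:ℝ) < 2 ^ (i + 1) := one_lt_pow₀ (by norm_num) (by omega)

lemma pow_lt {i m : ℕ} (h : i < m) : (2:ℝ) ^ i < 2 ^ m := pow_lt_pow_right₀ (by norm_num) h

lemma kk_pos (n i : ℕ) (hi : i < n) : 0 < kk n i := by
  induction i with
  | zero => simp [kk]
  | succ i ih =>
    rw [kk]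
    have h1 := pow_gt_one i
    have h2 := pow_lt hi
    have h3 := ih (by omega)
    apply div_pos (mul_pos h3 _) <;> linarith

/-- the three-term recurrence, normalised -/
def Rec (m : ℕ) (t : ℝ) (s : ℕ → ℝ) : Prop :=
  s 0 = 1 ∧ ∀ i, i < m →
    ((2:ℝ) ^ m - 2 ^ i) * s (i + 1) = (t - 2 ^ i) * s i - (2 ^ (i + 1) - 2) * s (i - 1)

lemma adjG_eig {m : ℕ} {w : Submodule F2 (PV (m + 1))} (hw : w ∈ Lset (m + 1) 1) {t : ℝ} {s : ℕ → ℝ}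
    (hs : Rec m t s) {v : GVtx (m + 1) w → ℝ}
    (hv : (Mm (m + 1) w).mulVec v = (t + 2 ^ m - 2) • v) (i : ℕ) (hi : i ≤ m) :
    (adjG (m + 1) w (m + 1 - i)).mulVec v = (kk (m + 1) i * s i / 2 ^ i) • v := by
  induction i using Nat.strong_induction_on with
  | _ i ih =>
    rcases i with _ | i
    · rw [Nat.sub_zero, adjG_n, Matrix.one_mulVec, hs.1]
      simp [kk]
    · have h0 := ih i (by omega) (by omega)
      have hrec := hs.2 i (by omega)
      have hM := congrArg (fun A => Matrix.mulVec A v) (Mm_adjG hw i (by omega))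
      simp only [← Matrix.mulVec_mulVec, Matrix.add_mulVec, Matrix.smul_mulVec] at hM
      rw [h0, Matrix.mulVec_smul, hv] at hM
      have q1 : (2:ℝ) ^ (i + 1) - 1 ≠ 0 := by have := pow_gt_one i; linarith
      have q2 : (2:ℝ) ^ (i + 1) ≠ 0 := by positivity
      have hprev : (((2:ℝ) ^ (m + 1) - 2 ^ i)) • (adjG (m + 1) w (m + 1 - i + 1)).mulVec v =
          (kk (m + 1) i * (2 ^ (i + 1) - 2) * s (i - 1) / 2 ^ i) • v := by
        rcases i with _ | i
        · have : adjG (m + 1) w (m + 1 - 0 + 1) = 0 := by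
            ext x y
            rw [adjG_eq, Km, if_neg]
            · rfl
            · have a : fr x.1 = m + 1 := x.2.1.2
              have := fr_mono (inf_le_left : x.1 ⊓ y.1 ≤ x.1)
              omega
          rw [this]; simp
        · have e : m + 1 - (i + 1) + 1 = m + 1 - i := by omega
          rw [e, ih i (by omega) (by omega), smul_smul]
          congr 1
          have q3 : (2:ℝ) ^ (i + 1) - 1 ≠ 0 := by have := pow_gt_one i; linarith
          rw [kk, Nat.add_sub_cancel]
          field_simp
          ring
      rw [hprev] at hM
      have hfin : ((2:ℝ) ^ (i + 1) - 1) • (adjG (m + 1) w (m + 1 - (i + 1))).mulVec v =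
          (((2:ℝ) ^ (i + 1) - 1) * (kk (m + 1) (i + 1) * s (i + 1) / 2 ^ (i + 1))) • v := by
        have e : ((2:ℝ) ^ (i + 1) - 1) • (adjG (m + 1) w (m + 1 - (i + 1))).mulVec v =
          ((kk (m + 1) i * s i / 2 ^ i) * (t + 2 ^ m - 2)
            - ((2:ℝ) ^ m + 2 ^ i - 2) * (kk (m + 1) i * s i / 2 ^ i)
            - (kk (m + 1) i * (2 ^ (i + 1) - 2) * s (i - 1) / 2 ^ i)) • v := by
          ext z
          have := congrFun hM z
          simp only [Pi.add_apply, Pi.smul_apply, smul_eq_mul, Nat.add_sub_cancel] at this ⊢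
          linear_combination -this
        rw [e]
        congr 1
        have e2 : kk (m + 1) (i + 1) * ((2:ℝ) ^ (i + 1) - 1) =
            kk (m + 1) i * (2 ^ (m + 1) - 2 ^ (i + 1)) := by
          rw [kk]; field_simp
        have e3 : ((2:ℝ) ^ (i + 1) - 1) * (kk (m + 1) (i + 1) * s (i + 1) / 2 ^ (i + 1)) =
            kk (m + 1) i * (((2:ℝ) ^ m - 2 ^ i) * s (i + 1)) / 2 ^ i := by
          rw [show ((2:ℝ) ^ (i + 1) - 1) * (kk (m + 1) (i + 1) * s (i + 1) / 2 ^ (i + 1)) =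
            (kk (m + 1) (i + 1) * ((2:ℝ) ^ (i + 1) - 1)) * s (i + 1) / 2 ^ (i + 1) by ring, e2]
          field_simp
          ring
        rw [e3, hrec]
        ring
      exact smul_right_injective _ q1 (by simpa only [smul_smul] using hfin)

lemma rec_zero (m : ℕ) : Rec m (2 ^ (m + 1) - 1) (fun i => 2 ^ i) := by
  refine ⟨by simp, ?_⟩
  intro i _
  rcases i with _ | i
  · simp; ring
  · simp only [Nat.add_sub_cancel]; ring

lemma rec_last (m : ℕ) : Rec m (2 - 2 ^ m) (fun i => (-1) ^ i) := by
  refine ⟨by simp, ?_⟩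
  intro i _
  rcases i with _ | i
  · simp; ring
  · simp only [Nat.add_sub_cancel]; ring

lemma rec_one (m : ℕ) (hm : 1 ≤ m) :
    Rec m (2 ^ m - 2) (fun i => (2 ^ m + 1 - 2 ^ (i + 1)) / (2 ^ m - 1)) := by
  have : (2:ℝ) ^ m - 1 ≠ 0 := by
    have := pow_lt (i := 0) (m := m) (by omega)
    rw [pow_zero] at this; linarith
  refine ⟨?_, ?_⟩
  · simp only [zero_add, pow_one]; field_simp; ring
  · intro i _
    rcases i with _ | i
    · field_simp; ring
    · simp only [Nat.add_sub_cancel]; field_simp; ring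

/-- general solution -/
noncomputable def gs (m : ℕ) (t : ℝ) : ℕ → ℝ
  | 0 => 1
  | 1 => (t - 1) / (2 ^ m - 1)
  | i + 2 => ((t - 2 ^ (i + 1)) * gs m t (i + 1) - (2 ^ (i + 2) - 2) * gs m t i) /
      (2 ^ m - 2 ^ (i + 1))

lemma rec_gs (m : ℕ) (t : ℝ) : Rec m t (gs m t) := by
  refine ⟨rfl, ?_⟩
  intro i hi
  have h : (2:ℝ) ^ m - 2 ^ i ≠ 0 := by have := pow_lt hi; linarith
  rcases i with _ | i
  · simp only [gs, zero_add, pow_zero] at *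
    field_simp; ring
  · simp only [gs, Nat.add_sub_cancel]
    field_simp

lemma rec_bound {m j : ℕ} (hm : m + 1 = 2 * j) (hj : 2 ≤ j) {t : ℝ} {s : ℕ → ℝ}
    (hs : Rec m t s) (ht : |t| ≤ 2 ^ (m - 1) - 4) : ∀ i, i ≤ j → |s i| ≤ 1 := by
  intro i
  induction i using Nat.strong_induction_on with
  | _ i ih =>
    intro hi
    rcases i with _ | i
    · rw [hs.1]; simp
    · have h1 := ih i (by omega) (by omega)
      have h2 := ih (i - 1) (by omega) (by omega)
      have hrec := hs.2 i (by omega)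
      have hlt := pow_lt (show i < m by omega)
      have hp : 0 < (2:ℝ) ^ m - 2 ^ i := by linarith
      have hi1 : (1:ℝ) ≤ 2 ^ i := one_le_pow₀ (by norm_num)
      have hnum : 4 * (2:ℝ) ^ i ≤ 2 ^ (m - 1) + 6 := by
        rcases Nat.lt_or_ge 2 j with h | h
        · have : (2:ℝ) ^ (i + 2) ≤ 2 ^ (m - 1) := pow_le_pow_right₀ (by norm_num) (by omega)
          rw [pow_add] at this; linarith
        · have e1 : m = 3 := by omega
          have : (2:ℝ) ^ i ≤ 2 ^ 1 := pow_le_pow_right₀ (by norm_num) (by omega)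
          rw [e1]; norm_num at *; linarith
      have hmm : (2:ℝ) ^ m = 2 * 2 ^ (m - 1) := by
        rw [← pow_succ']; congr 1; omega
      have a1 : |(t - 2 ^ i) * s i| ≤ (2 ^ (m - 1) - 4 + 2 ^ i) * 1 := by
        rw [abs_mul]
        apply mul_le_mul _ h1 (abs_nonneg _)
        · have := abs_nonneg t; linarith
        · calc |t - 2 ^ i| ≤ |t| + |(2:ℝ) ^ i| := abs_sub _ _
            _ ≤ _ := by rw [abs_of_pos (show (0:ℝ) < 2 ^ i by positivity)]; linarith
      have a2 : |(2 ^ (i + 1) - 2) * s (i - 1)| ≤ (2 * 2 ^ i - 2) * 1 := by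
        rw [abs_mul]
        have : |(2:ℝ) ^ (i + 1) - 2| = 2 * 2 ^ i - 2 := by
          rw [pow_succ', abs_of_nonneg (by linarith)]
        rw [this]
        exact mul_le_mul_of_nonneg_left h2 (by linarith)
      have a3 : |((2:ℝ) ^ m - 2 ^ i) * s (i + 1)| ≤ (2 ^ m - 2 ^ i) * 1 := by
        rw [hrec]
        refine (abs_sub _ _).trans ?_
        linarith
      rw [abs_mul, abs_of_pos hp] at a3
      exact le_of_mul_le_mul_left a3 hp

lemma rec_all {m j k : ℕ} (hm : m + 1 = 2 * j) (hj : 2 ≤ j) (hk1 : 1 ≤ k) (hk : k ≤ m) :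
    ∃ s, Rec m (2 ^ (m + 1 - k) - 2 ^ k) s ∧ |s j| ≤ 1 := by
  rcases Nat.eq_or_lt_of_le hk1 with h | h
  · subst h
    refine ⟨_, by simpa using rec_one m hk, ?_⟩
    have h1 := pow_lt (i := 0) (m := m) (by omega)
    rw [pow_zero] at h1
    have h2 : (2:ℝ) ^ (j + 1) ≤ 2 ^ m * 2 := by
      rw [← pow_succ]; exact pow_le_pow_right₀ (by norm_num) (by omega)
    have h3 := pow_gt_one j
    have h4 : (2:ℝ) ≤ 2 ^ (j + 1) := by
      calc (2:ℝ) = 2 ^ 1 := by norm_num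
        _ ≤ _ := pow_le_pow_right₀ (by norm_num) (by omega)
    rw [abs_div, abs_of_pos (show (0:ℝ) < 2 ^ m - 1 by linarith), div_le_one (by linarith), abs_le]
    constructor <;> linarith
  rcases Nat.eq_or_lt_of_le hk with h' | h'
  · subst h'
    refine ⟨_, by simpa using rec_last k, ?_⟩
    simp
  · refine ⟨_, rec_gs m _, ?_⟩
    refine rec_bound hm hj (rec_gs m _) ?_ j le_rfl
    have b1 : (2:ℝ) ^ k ≤ 2 ^ (m - 1) := pow_le_pow_right₀ (by norm_num) (by omega)
    have b2 : (2:ℝ) ^ (m + 1 - k) ≤ 2 ^ (m - 1) := pow_le_pow_right₀ (by norm_num) (by omega)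
    have b3 : (2:ℝ) ^ 2 ≤ 2 ^ k := pow_le_pow_right₀ (by norm_num) (by omega)
    have b4 : (2:ℝ) ^ 2 ≤ 2 ^ (m + 1 - k) := pow_le_pow_right₀ (by norm_num) (by omega)
    rw [abs_le]
    constructor <;> linarith

lemma lam_succ (m k : ℕ) (hk : k ≤ m) :
    lam (m + 1) (k + 1) = (2 ^ (m + 1 - k) - 2 ^ k) + 2 ^ m - 2 := by
  have e : m + 1 + 1 - (k + 1) = m + 1 - k := by omega
  rw [lam, e]
  simp only [Nat.add_sub_cancel]
  ring

lemma eig_cases {m j : ℕ} (hm : m + 1 = 2 * j) (hj : 2 ≤ j) {w : Submodule F2 (PV (m + 1))}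
    (hw : w ∈ Lset (m + 1) 1) {μ : ℝ} (hμ : μ ∈ eigSet (adjG (m + 1) w (m + 1 - j))) :
    μ = kk (m + 1) j ∨ |μ| ≤ kk (m + 1) j / 2 ^ j := by
  obtain ⟨v, hv0, hv⟩ := hμ
  have hex : ∃ k, (Pm (m + 1) w k).mulVec v = 0 := ⟨m + 1, by rw [Pm_n hw]; simp⟩
  obtain ⟨k, hk⟩ : ∃ k, Nat.find hex = k + 1 := by
    refine ⟨Nat.find hex - 1, ?_⟩
    have : Nat.find hex ≠ 0 := by
      intro h
      have := Nat.find_spec hex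
      rw [h, Pm, Matrix.one_mulVec] at this
      exact hv0 this
    omega
  have hkm : k ≤ m := by
    have : Nat.find hex ≤ m + 1 := Nat.find_min' hex (by rw [Pm_n hw]; simp)
    omega
  have h1 := Nat.find_spec hex
  rw [hk] at h1
  have h2 : (Pm (m + 1) w k).mulVec v ≠ 0 := Nat.find_min hex (by omega)
  set u := (Pm (m + 1) w k).mulVec v with hu
  have hMu : (Mm (m + 1) w).mulVec u = ((2 ^ (m + 1 - k) - 2 ^ k) + 2 ^ m - 2 : ℝ) • u := by
    rw [Pm, ← Matrix.mulVec_mulVec, Matrix.sub_mulVec, Matrix.smul_mulVec, Matrix.one_mulVec,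
      sub_eq_zero] at h1
    rw [← lam_succ m k hkm]
    exact h1
  have hAu : (adjG (m + 1) w (m + 1 - j)).mulVec u = μ • u := by
    rw [hu, Matrix.mulVec_mulVec, adjG_Pm hw, ← Matrix.mulVec_mulVec, hv, Matrix.mulVec_smul]
  have hK := kk_pos (m + 1) j (by omega)
  have hcmp : ∀ s, Rec m (2 ^ (m + 1 - k) - 2 ^ k) s → μ = kk (m + 1) j * s j / 2 ^ j := by
    intro s hs
    have := adjG_eig hw hs hMu j (by omega)
    rw [hAu] at this
    exact smul_left_injective ℝ h2 this
  rcases Nat.eq_zero_or_pos k with h0 | h0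
  · left
    subst h0
    rw [hcmp _ (by simpa using rec_zero m)]
    field_simp
  · right
    obtain ⟨s, hs, hs1⟩ := rec_all hm hj h0 hkm
    rw [hcmp s hs, abs_div, abs_mul, abs_of_pos hK, abs_of_pos (show (0:ℝ) < 2 ^ j by positivity)]
    gcongr
    nlinarith

lemma eig_top {m j : ℕ} (hm : m + 1 = 2 * j) (hj : 2 ≤ j) {w : Submodule F2 (PV (m + 1))}
    (hw : w ∈ Lset (m + 1) 1) : kk (m + 1) j ∈ eigSet (adjG (m + 1) w (m + 1 - j)) := by
  obtain ⟨x, hx, hwx⟩ := exists_max w hw.1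
  refine ⟨fU w w, ?_, ?_⟩
  · intro h
    have := congrFun h ⟨x, hx, hwx⟩
    simp [fU, hwx] at this
  · have hM : (Mm (m + 1) w).mulVec (fU w w) = ((2 ^ (m + 1) - 1) + 2 ^ m - 2 : ℝ) • fU w w := by
      ext z
      have hw1 : fr w = 1 := hw.2
      have hc := card_hyp (le_refl w)
      have hc0 : hyp w w = ∅ := by
        rw [← Finset.card_eq_zero]; simpa using hc
      have hl := lam_succ m 0 (by omega)
      rw [Mm_fU hw hw.1 le_rfl, hc0, hw1]
      simp only [zero_add] at hl
      rw [hl]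
      simp
    rw [adjG_eig hw (rec_zero m) hM j (by omega)]
    congr 1
    field_simp

lemma eig_last {m j : ℕ} (hm : m + 1 = 2 * j) (hj : 2 ≤ j) {w : Submodule F2 (PV (m + 1))}
    (hw : w ∈ Lset (m + 1) 1) :
    kk (m + 1) j * (-1) ^ j / 2 ^ j ∈ eigSet (adjG (m + 1) w (m + 1 - j)) := by
  obtain ⟨v, hv0, hv⟩ := exists_ker hw (by omega)
  refine ⟨v, hv0, ?_⟩
  have hl := lam_succ m m le_rfl
  have e : m + 1 - m = 1 := by omega
  rw [e, pow_one] at hl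
  rw [hl] at hv
  exact adjG_eig hw (rec_last m) hv j (by omega)

end SRG

/-- For even `n ≥ 4` and `w ∈ L^n_1`, the spectral ratio of `G_w` (adjacency:
`dim(x∩y) = n/2`) equals `2^{−n/2}`. -/
theorem spectral_ratio_G_w :
    ∀ n : ℕ, Even n → 4 ≤ n → ∀ w ∈ Lset n 1,
      specParam (adjG n w (n / 2)) / maxEig (adjG n w (n / 2)) =
        ((2 : ℝ) ^ (n / 2))⁻¹ := by
  intro n hn h4 w hw
  obtain ⟨m, rfl⟩ : ∃ m, n = m + 1 := ⟨n - 1, by omega⟩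
  obtain ⟨j, hj⟩ := hn
  have hm : m + 1 = 2 * j := by omega
  have hj2 : 2 ≤ j := by omega
  have e1 : (m + 1) / 2 = j := by omega
  have e2 : (m + 1) - j = j := by omega
  have hC := fun μ => SRG.eig_cases hm hj2 hw (μ := μ)
  have hT := SRG.eig_top hm hj2 hw
  have hL := SRG.eig_last hm hj2 hw
  have hK := SRG.kk_pos (m + 1) j (by omega)
  rw [e2] at hC hT hL
  rw [e1]
  set K := SRG.kk (m + 1) j
  have hp : (1:ℝ) < 2 ^ j := one_lt_pow₀ (by norm_num) (by omega)
  have hlt : K / 2 ^ j < K := div_lt_self hK hp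
  have hmax : maxEig (adjG (m + 1) w j) = K := by
    apply IsGreatest.csSup_eq
    refine ⟨hT, ?_⟩
    intro μ hμ
    rcases hC μ hμ with h | h
    · exact h.le
    · exact (le_abs_self μ).trans (h.trans hlt.le)
  have habs : sSup (abs '' eigSet (adjG (m + 1) w j)) = K := by
    apply IsGreatest.csSup_eq
    refine ⟨⟨K, hT, abs_of_pos hK⟩, ?_⟩
    rintro _ ⟨μ, hμ, rfl⟩
    rcases hC μ hμ with h | h
    · rw [h, abs_of_pos hK]
    · exact h.trans hlt.le
  have hsp : specParam (adjG (m + 1) w j) = K / 2 ^ j := by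
    rw [specParam, habs]
    apply IsGreatest.csSup_eq
    refine ⟨⟨⟨_, hL, ?_⟩, hlt.ne⟩, ?_⟩
    · rw [abs_div, abs_mul, abs_pow, abs_neg, abs_one, one_pow, mul_one, abs_of_pos hK,
        abs_of_pos (by positivity)]
    · rintro _ ⟨⟨μ, hμ, rfl⟩, hne⟩
      rcases hC μ hμ with h | h
      · exact absurd (by rw [h, abs_of_pos hK]; rfl) hne
      · exact h
  rw [hmax, hsp]
  field_simp
end
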